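/- arXiv:2603.26061 — 5 statements merged into one kernel-verified Lean document; each statement's English description precedes it below -/
import Mathlib

section
/- Let φ be an N-function that is piecewise twice differentiable in the sense that φ ∈ W^{2,∞}_loc((0,∞)). If there exist constants 0 < c ≤ C < ∞ with c ≤ φ''(t)t/φ'(t) ≤ C for almost all t > 0, then φ is uniformly convex, i.e. there exist constants 0 < c₁ ≤ C₁ < ∞ such that c₁ φ'(s)/s ≤ (φ'(t) − φ'(s))/(t − s) ≤ C₁ φ'(s)/s for all 0 ≤ t < s. -/
open Filter MeasureTheory Set Topology

noncomputable section

/-- `φ : [0,∞) → [0,∞)` is an N-function with right-continuous non-decreasing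
derivative `φ'`. -/
structure IsNFunction (φ φ' : ℝ → ℝ) : Prop where
  continuousOn : ContinuousOn φ (Set.Ici 0)
  convexOn : ConvexOn ℝ (Set.Ici 0) φ
  deriv_nonneg : ∀ t : ℝ, 0 ≤ t → 0 ≤ φ' t
  deriv_monotoneOn : MonotoneOn φ' (Set.Ici 0)
  deriv_rightContinuous : ∀ t : ℝ, 0 ≤ t →
    Filter.Tendsto φ' (nhdsWithin t (Set.Ioi t)) (nhds (φ' t))
  deriv_zero : φ' 0 = 0
  deriv_pos : ∀ t : ℝ, 0 < t → 0 < φ' t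
  deriv_tendsto_atTop : Filter.Tendsto φ' Filter.atTop Filter.atTop
  eq_integral : ∀ t : ℝ, 0 ≤ t → φ t = ∫ s in (0:ℝ)..t, φ' s

/-- Fenchel conjugate `φ*(r) = sup_{s ≥ 0} (r s − φ(s))`. -/
def fenchelConj (φ : ℝ → ℝ) (r : ℝ) : ℝ :=
  sSup {x : ℝ | ∃ s : ℝ, 0 ≤ s ∧ x = r * s - φ s}

/-- Right-continuous inverse `(φ')⁻¹(t) = sup {r ≥ 0 : φ'(r) ≤ t}`. -/
def rcInv (φ' : ℝ → ℝ) (t : ℝ) : ℝ :=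
  sSup {r : ℝ | 0 ≤ r ∧ φ' r ≤ t}

/-!
The bounds `c ≤ φ''(t) t / φ'(t) ≤ C` say that `φ'(t) t^(-c)` is non-decreasing and `φ'(t) t^(-C)`
is non-increasing, by differentiating and integrating the sign of the derivative. With `x = t / s`
this gives `x^C φ'(s) ≤ φ'(t) ≤ x^c φ'(s)` for `0 ≤ t < s`, so `φ'(s) - φ'(t)` lies between
`(1 - x^c) φ'(s)` and `(1 - x^C) φ'(s)`, and Bernoulli's inequality compares `1 - x^p` with `1 - x`.
-/

section EulerInequality

variable {f : ℝ → ℝ} {a b p : ℝ}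

theorem monotoneOn_of_ae_deriv_nonneg (hf : AbsolutelyContinuousOnInterval f a b)
    (hderiv : ∀ᵐ t ∂volume.restrict (Icc a b), 0 ≤ deriv f t) : MonotoneOn f (Icc a b) := by
  intro x hx y hy hxy
  have hint : ∫ t in x..y, deriv f t = f y - f x :=
    (hf.mono (uIcc_subset_uIcc (Icc_subset_uIcc hx) (Icc_subset_uIcc hy))).integral_deriv_eq_sub
  have hnonneg : 0 ≤ ∫ t in x..y, deriv f t :=
    intervalIntegral.integral_nonneg_of_ae_restrict hxy
      (ae_restrict_of_ae_restrict_of_subset (Icc_subset_Icc hx.1 hy.2) hderiv)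
  linarith

theorem hasDerivAt_mul_rpow_neg {f' t : ℝ} (hf : HasDerivAt f f' t) (ht : 0 < t) :
    HasDerivAt (fun u ↦ f u * u ^ (-p)) (t ^ (-p - 1) * (t * f' - p * f t)) t := by
  have hsplit : t ^ (-p) = t ^ (-p - 1) * t := by
    rw [← Real.rpow_add_one ht.ne', sub_add_cancel]
  refine (hf.mul (Real.hasDerivAt_rpow_const (p := -p) (Or.inl ht.ne'))).congr_deriv ?_
  rw [hsplit]
  ring

theorem monotoneOn_mul_rpow_neg (ha : 0 < a) (hf : AbsolutelyContinuousOnInterval f a b)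
    (hderiv : ∀ᵐ t ∂volume.restrict (Icc a b), p * f t ≤ t * deriv f t) :
    MonotoneOn (fun t ↦ f t * t ^ (-p)) (Icc a b) := by
  rcases lt_or_ge b a with hba | hab
  · exact (subsingleton_Icc_of_ge hba.le).monotoneOn _
  have hpos {t : ℝ} (ht : t ∈ Icc a b) : 0 < t := ha.trans_le ht.1
  have hpow : AbsolutelyContinuousOnInterval (fun t : ℝ ↦ t ^ (-p)) a b := by
    refine ContDiffOn.absolutelyContinuousOnInterval fun t ht ↦ ?_
    rw [uIcc_of_le hab] at ht
    exact (Real.contDiffAt_rpow_const_of_ne (hpos ht).ne').contDiffWithinAt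
  refine monotoneOn_of_ae_deriv_nonneg (hf.fun_mul hpow) ?_
  filter_upwards [ae_restrict_of_ae hf.ae_differentiableAt, hderiv,
    ae_restrict_mem measurableSet_Icc] with t hdiff hle ht
  rw [(hasDerivAt_mul_rpow_neg (hdiff (Icc_subset_uIcc ht)).hasDerivAt (hpos ht)).deriv]
  exact mul_nonneg (Real.rpow_nonneg (hpos ht).le _) (sub_nonneg.2 hle)

theorem le_div_rpow_mul_of_ae_mul_le_mul_deriv (ha : 0 < a) (hab : a ≤ b)
    (hf : AbsolutelyContinuousOnInterval f a b)
    (hderiv : ∀ᵐ t ∂volume.restrict (Icc a b), p * f t ≤ t * deriv f t) :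
    f a ≤ (a / b) ^ p * f b := by
  have hb : 0 < b := ha.trans_le hab
  have hmono : f a * a ^ (-p) ≤ f b * b ^ (-p) :=
    monotoneOn_mul_rpow_neg ha hf hderiv (left_mem_Icc.2 hab) (right_mem_Icc.2 hab) hab
  rw [Real.rpow_neg ha.le, Real.rpow_neg hb.le, ← div_eq_mul_inv,
    div_le_iff₀ (Real.rpow_pos_of_pos ha p)] at hmono
  calc f a ≤ f b * (b ^ p)⁻¹ * a ^ p := hmono
    _ = (a / b) ^ p * f b := by rw [Real.div_rpow ha.le hb.le]; ring

theorem div_rpow_mul_le_of_ae_mul_deriv_le_mul (ha : 0 < a) (hab : a ≤ b)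
    (hf : AbsolutelyContinuousOnInterval f a b)
    (hderiv : ∀ᵐ t ∂volume.restrict (Icc a b), t * deriv f t ≤ p * f t) :
    (a / b) ^ p * f b ≤ f a := by
  have hneg : (-f) a ≤ (a / b) ^ p * (-f) b := by
    refine le_div_rpow_mul_of_ae_mul_le_mul_deriv ha hab hf.neg ?_
    filter_upwards [hderiv] with t ht
    simpa [deriv.neg] using ht
  simpa using hneg

end EulerInequality

section Bernoulli

variable {x p : ℝ}

theorem min_mul_one_sub_le_one_sub_rpow (hx₀ : 0 ≤ x) (hx₁ : x ≤ 1) (hp : 0 ≤ p) :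
    min p 1 * (1 - x) ≤ 1 - x ^ p := by
  rcases le_total p 1 with hp₁ | hp₁
  · have hbernoulli := rpow_one_add_le_one_add_mul_self (s := x - 1) (by linarith) hp hp₁
    rw [add_sub_cancel] at hbernoulli
    rw [min_eq_left hp₁]
    linarith
  · rw [min_eq_right hp₁, one_mul]
    exact sub_le_sub_left (Real.rpow_le_self_of_le_one hx₀ hx₁ hp₁) 1

theorem one_sub_rpow_le_max_mul_one_sub (hx₀ : 0 ≤ x) (hx₁ : x ≤ 1) :
    1 - x ^ p ≤ max p 1 * (1 - x) := by
  rcases le_total p 1 with hp₁ | hp₁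
  · rw [max_eq_right hp₁, one_mul]
    exact sub_le_sub_left (Real.self_le_rpow_of_le_one hx₀ hx₁ hp₁) 1
  · have hbernoulli := one_add_mul_self_le_rpow_one_add (s := x - 1) (by linarith) hp₁
    rw [add_sub_cancel] at hbernoulli
    rw [max_eq_left hp₁]
    linarith

end Bernoulli

section DifferenceQuotient

variable {f : ℝ → ℝ} {t s p : ℝ}

theorem mul_div_eq_mul_one_sub_div_mul_div_sub (k y : ℝ) (hs : s ≠ 0) (hts : t ≠ s) :
    k * (y / s) = k * (1 - t / s) * y / (s - t) := by
  have hsub : s - t ≠ 0 := sub_ne_zero.2 hts.symm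
  field_simp

theorem min_mul_div_le_div_sub (ht : 0 ≤ t) (hts : t < s) (hp : 0 ≤ p) (hfs : 0 ≤ f s)
    (hf : f t ≤ (t / s) ^ p * f s) :
    min p 1 * (f s / s) ≤ (f t - f s) / (t - s) := by
  have hs : 0 < s := ht.trans_lt hts
  have hst : 0 ≤ s - t := sub_nonneg.2 hts.le
  calc min p 1 * (f s / s) = min p 1 * (1 - t / s) * f s / (s - t) :=
        mul_div_eq_mul_one_sub_div_mul_div_sub _ _ hs.ne' hts.ne
    _ ≤ (1 - (t / s) ^ p) * f s / (s - t) := by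
        gcongr
        exact min_mul_one_sub_le_one_sub_rpow (by positivity) ((div_le_one hs).2 hts.le) hp
    _ ≤ (f s - f t) / (s - t) := div_le_div_of_nonneg_right (by linarith) hst
    _ = (f t - f s) / (t - s) := by rw [← neg_div_neg_eq, neg_sub, neg_sub]

theorem div_sub_le_max_mul_div (ht : 0 ≤ t) (hts : t < s) (hfs : 0 ≤ f s)
    (hf : (t / s) ^ p * f s ≤ f t) :
    (f t - f s) / (t - s) ≤ max p 1 * (f s / s) := by
  have hs : 0 < s := ht.trans_lt hts
  have hst : 0 ≤ s - t := sub_nonneg.2 hts.le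
  calc (f t - f s) / (t - s) = (f s - f t) / (s - t) := by
        rw [← neg_div_neg_eq, neg_sub, neg_sub]
    _ ≤ (1 - (t / s) ^ p) * f s / (s - t) := div_le_div_of_nonneg_right (by linarith) hst
    _ ≤ max p 1 * (1 - t / s) * f s / (s - t) := by
        gcongr
        exact one_sub_rpow_le_max_mul_one_sub (by positivity) ((div_le_one hs).2 hts.le)
    _ = max p 1 * (f s / s) := (mul_div_eq_mul_one_sub_div_mul_div_sub _ _ hs.ne' hts.ne).symm

end DifferenceQuotient

/-- if `φ ∈ W^{2,∞}_loc((0,∞))` (i.e. `φ'` is locally Lipschitz on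
`(0,∞)` with a.e. derivative `φ''`) and `c ≤ φ''(t)t/φ'(t) ≤ C` a.e., then `φ`
is uniformly convex. -/
theorem uniformly_convex_of_second_deriv_bounds (φ φ' φ'' : ℝ → ℝ)
    (hφ : IsNFunction φ φ')
    (hlip : ∀ a b : ℝ, 0 < a → a ≤ b → ∃ K : NNReal, LipschitzOnWith K φ' (Set.Icc a b))
    (hderiv : ∀ᵐ t ∂(volume.restrict (Set.Ioi (0:ℝ))), HasDerivAt φ' (φ'' t) t)
    (c C : ℝ) (hc : 0 < c) (hcC : c ≤ C)
    (hbound : ∀ᵐ t ∂(volume.restrict (Set.Ioi (0:ℝ))),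
      c ≤ φ'' t * t / φ' t ∧ φ'' t * t / φ' t ≤ C) :
    ∃ c₁ C₁ : ℝ, 0 < c₁ ∧ c₁ ≤ C₁ ∧
      ∀ t s : ℝ, 0 ≤ t → t < s →
        c₁ * (φ' s / s) ≤ (φ' t - φ' s) / (t - s) ∧
        (φ' t - φ' s) / (t - s) ≤ C₁ * (φ' s / s) := by
  have heuler : ∀ᵐ t ∂(volume.restrict (Set.Ioi (0:ℝ))),
      c * φ' t ≤ t * deriv φ' t ∧ t * deriv φ' t ≤ C * φ' t := by
    filter_upwards [hderiv, hbound, ae_restrict_mem measurableSet_Ioi] with t hd hb ht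
    rwa [le_div_iff₀ (hφ.deriv_pos t ht), div_le_iff₀ (hφ.deriv_pos t ht), mul_comm (φ'' t),
      ← hd.deriv] at hb
  have hpower (t s : ℝ) (ht : 0 ≤ t) (hts : t < s) :
      φ' t ≤ (t / s) ^ c * φ' s ∧ (t / s) ^ C * φ' s ≤ φ' t := by
    rcases ht.eq_or_lt with rfl | ht
    · simp [hφ.deriv_zero, hc.ne', (hc.trans_le hcC).ne']
    obtain ⟨K, hK⟩ := hlip t s ht hts.le
    have hac : AbsolutelyContinuousOnInterval φ' t s :=
      LipschitzOnWith.absolutelyContinuousOnInterval (by rwa [uIcc_of_le hts.le])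
    have hae := ae_restrict_of_ae_restrict_of_subset ((Icc_subset_Ioi_iff hts.le).2 ht) heuler
    exact ⟨le_div_rpow_mul_of_ae_mul_le_mul_deriv ht hts.le hac (hae.mono fun _ h ↦ h.1),
      div_rpow_mul_le_of_ae_mul_deriv_le_mul ht hts.le hac (hae.mono fun _ h ↦ h.2)⟩
  refine ⟨min c 1, max C 1, lt_min hc one_pos, (min_le_right _ _).trans (le_max_right _ _), ?_⟩
  intro t s ht hts
  have hfs : 0 ≤ φ' s := hφ.deriv_nonneg s (ht.trans hts.le)
  exact ⟨min_mul_div_le_div_sub ht hts hc.le hfs (hpower t s ht hts).1,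
    div_sub_le_max_mul_div ht hts hfs (hpower t s ht hts).2⟩
end
end

section
/- Let φ be an N-function, let B: ℝᴺ → ℝᴹ be linear, V₀ ⊆ ℝᴺ a linear subspace with ker(B) ∩ V₀ = {0}, g ∈ ℝᴺ, f ∈ ℝᴺ, and positive weights w ∈ (0,∞)ᴹ. Let u_g = u + g where u minimizes v ↦ J(v+g) over V₀, and let σ minimize J* over Σ_f. Then J(u_g) + f·g = min_{v∈V₀} J(v+g) + f·g = − min_{τ∈Σ_f} J*(τ) = −J*(σ). -/
/-!
For `u ∈ V₀` and `τ ∈ Σ_f` the linear terms of `J(u + g) + f·g + J*(τ)` combine to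
`-τ·B(u + g)`, so that the duality gap is the Fenchel–Young gap of the pair `(B(u + g), τ)`. It is
therefore nonnegative, and it vanishes as soon as `τ` is a subgradient of the modular
`F(y) = ∑ w_α φ(|y_α|)` at `b = B(u + g)`. If `u` is a minimizer, then `F(b) + f·v ≤ F(b + Bv)` for
`v ∈ V₀`, and separating the strict epigraph of `F` from the points `(b + Bv, F(b) + f·v)` yields
such a subgradient with `τ·Bv = f·v` on `V₀`, that is, `τ ∈ Σ_f`.
-/

open Filter MeasureTheory Set Topology

noncomputable section

/-- `A_ψ(t) = (ψ(|t|)/|t|)·t` for `t ≠ 0` and `A_ψ(0) = 0`. -/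
def Aphi (ψ : ℝ → ℝ) (t : ℝ) : ℝ := if t = 0 then 0 else ψ (|t|) / |t| * t

/-- `V_ψ(t) = sqrt(ψ(|t|)/|t|)·t` for `t ≠ 0` and `V_ψ(0) = 0`. -/
def Vphi (ψ : ℝ → ℝ) (t : ℝ) : ℝ := if t = 0 then 0 else Real.sqrt (ψ (|t|) / |t|) * t

/-- Primal energy `J(v) = Σ_α w_α φ(|(Bv)_α|) − f·v`. -/
def primalJ {N M : ℕ} (w : Fin M → ℝ) (φ : ℝ → ℝ)
    (B : (Fin N → ℝ) →ₗ[ℝ] (Fin M → ℝ)) (f v : Fin N → ℝ) : ℝ :=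
  (∑ α, w α * φ (|B v α|)) - ∑ i, f i * v i

/-- Dual energy `J*(τ) = Σ_α w_α ψ(w_α⁻¹|τ_α|) − τᵀ(Bg)` with dual integrand `ψ`. -/
def dualJ {N M : ℕ} (w : Fin M → ℝ) (ψ : ℝ → ℝ)
    (B : (Fin N → ℝ) →ₗ[ℝ] (Fin M → ℝ)) (g : Fin N → ℝ) (τ : Fin M → ℝ) : ℝ :=
  (∑ α, w α * ψ ((w α)⁻¹ * |τ α|)) - ∑ α, τ α * B g α

/-- Dual constraint set `Σ_f = {τ : τᵀ(Bv) = f·v for all v ∈ V₀}`. -/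
def SigmaF {N M : ℕ} (B : (Fin N → ℝ) →ₗ[ℝ] (Fin M → ℝ))
    (V₀ : Submodule ℝ (Fin N → ℝ)) (f : Fin N → ℝ) : Set (Fin M → ℝ) :=
  {τ | ∀ v ∈ V₀, (∑ α, τ α * B v α) = ∑ i, f i * v i}

section Separation

variable {E : Type*} [AddCommGroup E] [Module ℝ E] [TopologicalSpace E] [IsTopologicalAddGroup E]
  [ContinuousSMul ℝ E] {F : E → ℝ}

theorem exists_affine_between_of_convexOn (hF : ConvexOn ℝ univ F) (hFc : Continuous F)
    {C : Set (E × ℝ)} (hC : Convex ℝ C) (hne : C.Nonempty) (hCF : ∀ p ∈ C, p.2 ≤ F p.1) :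
    ∃ (τ : E →L[ℝ] ℝ) (c : ℝ), (∀ p ∈ C, p.2 ≤ τ p.1 + c) ∧ ∀ y, τ y + c ≤ F y := by
  have hopen : IsOpen {p : E × ℝ | p.1 ∈ univ ∧ F p.1 < p.2} := by
    simpa using isOpen_lt (hFc.comp continuous_fst) continuous_snd
  have hdisj : Disjoint {p : E × ℝ | p.1 ∈ univ ∧ F p.1 < p.2} C :=
    Set.disjoint_left.2 fun p hp hpC => (hCF p hpC).not_gt hp.2
  obtain ⟨L, s, hLepi, hLC⟩ :=
    geometric_hahn_banach_open hF.convex_strict_epigraph hopen hC hdisj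
  set ℓ : E →L[ℝ] ℝ := L.comp (.inl ℝ E ℝ) with hℓ
  set k : ℝ := -L (0, 1) with hk
  have hL (y : E) (t : ℝ) : L (y, t) = ℓ y - k * t := by
    have hsplit : ((y, t) : E × ℝ) = (y, 0) + t • (0, 1) := by simp
    rw [hsplit, map_add, map_smul, smul_eq_mul]
    simp only [hℓ, hk, ContinuousLinearMap.comp_apply, ContinuousLinearMap.inl_apply]
    ring
  have habove {y : E} {t : ℝ} (ht : F y < t) : ℓ y - k * t < s := hL y t ▸ hLepi _ ⟨mem_univ y, ht⟩
  have hbelow {p : E × ℝ} (hp : p ∈ C) : s ≤ ℓ p.1 - k * p.2 := hL p.1 p.2 ▸ hLC p hp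
  have hkpos : 0 < k := by
    obtain ⟨p, hp⟩ := hne
    have hlt : k * p.2 < k * (F p.1 + 1) := by
      linarith [habove (lt_add_one (F p.1)), hbelow hp]
    exact pos_of_mul_pos_left (by linarith : 0 < k * (F p.1 + 1 - p.2)) (by linarith [hCF p hp])
  have heq (y : E) : (k⁻¹ • ℓ) y + -s / k = (ℓ y - s) / k := by
    simp only [smul_apply, smul_eq_mul]
    ring
  refine ⟨k⁻¹ • ℓ, -s / k, fun p hp => ?_, fun y => le_of_forall_gt fun t ht => ?_⟩
  · rw [heq, le_div_iff₀' hkpos]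
    linarith [hbelow hp]
  · rw [heq, div_lt_iff₀' hkpos]
    linarith [habove ht]

theorem exists_subgradient_comp_eq (hF : ConvexOn ℝ univ F) (hFc : Continuous F)
    {V : Type*} [AddCommGroup V] [Module ℝ V] (T : V →ₗ[ℝ] E) (l : V →ₗ[ℝ] ℝ) {b : E}
    (hl : ∀ v, F b + l v ≤ F (b + T v)) :
    ∃ τ : E →L[ℝ] ℝ, (∀ v, τ (T v) = l v) ∧ ∀ y, F b + τ (y - b) ≤ F y := by
  have hgraph : Convex ℝ ((fun z => (b, F b) + z) '' (LinearMap.range (T.prod l) : Set (E × ℝ))) :=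
    (LinearMap.range (T.prod l)).convex.translate _
  obtain ⟨τ, c, hτgraph, hτF⟩ := exists_affine_between_of_convexOn hF hFc hgraph
    ((Submodule.nonempty _).image _) (by
      rintro _ ⟨_, ⟨v, rfl⟩, rfl⟩
      exact hl v)
  have hline (v : V) : F b + l v ≤ τ b + τ (T v) + c := by
    simpa using hτgraph _ ⟨_, ⟨v, rfl⟩, rfl⟩
  have hbase : τ b + c = F b := le_antisymm (hτF b) (by simpa using hline 0)
  refine ⟨τ, fun v => le_antisymm ?_ ?_, fun y => ?_⟩
  · have hneg := hline (-v)
    simp only [map_neg] at hneg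
    linarith
  · linarith [hline v]
  · linarith [hτF y, map_sub τ y b]

end Separation

theorem le_of_forall_sum_le_sum {ι A : Type*} {X : ι → Type*} [Fintype ι] [AddCommMonoid A]
    [PartialOrder A] [IsOrderedCancelAddMonoid A] {G : ∀ i, X i → A} {b : ∀ i, X i}
    (h : ∀ y : ∀ i, X i, ∑ i, G i (b i) ≤ ∑ i, G i (y i)) (i : ι) (x : X i) :
    G i (b i) ≤ G i x := by
  classical
  have hrest : ∑ j ∈ Finset.univ.erase i, G j (Function.update b i x j) =
      ∑ j ∈ Finset.univ.erase i, G j (b j) :=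
    Finset.sum_congr rfl fun j hj => by rw [Function.update_of_ne (Finset.ne_of_mem_erase hj)]
  have hupdate := h (Function.update b i x)
  rw [← Finset.add_sum_erase _ _ (Finset.mem_univ i),
    ← Finset.add_sum_erase _ (fun j => G j (Function.update b i x j)) (Finset.mem_univ i),
    hrest, Function.update_self] at hupdate
  exact le_of_add_le_add_right hupdate

section FenchelConj

variable {φ : ℝ → ℝ}

theorem convexOn_comp_abs (hconv : ConvexOn ℝ (Ici 0) φ) (hmono : MonotoneOn φ (Ici 0)) :
    ConvexOn ℝ univ fun x => φ |x| := by
  have himage : (norm : ℝ → ℝ) '' univ = Ici 0 := by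
    ext x
    exact ⟨fun ⟨y, _, hy⟩ => hy ▸ norm_nonneg y, fun hx => ⟨x, mem_univ x, Real.norm_of_nonneg hx⟩⟩
  exact ConvexOn.comp (himage ▸ hconv) convexOn_univ_norm (himage ▸ hmono)

theorem mul_le_add_fenchelConj {r s : ℝ} (hbdd : BddAbove {x | ∃ s, 0 ≤ s ∧ x = r * s - φ s})
    (hs : 0 ≤ s) : r * s ≤ φ s + fenchelConj φ r :=
  sub_le_iff_le_add'.1 (le_csSup hbdd ⟨s, hs, rfl⟩)

theorem add_fenchelConj_abs_le_of_subgradient {b t : ℝ}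
    (h : ∀ x, φ |b| + t * (x - b) ≤ φ |x|) : φ |b| + fenchelConj φ |t| ≤ t * b := by
  have hsup : fenchelConj φ |t| ≤ t * b - φ |b| := by
    refine csSup_le ⟨_, 0, le_rfl, rfl⟩ ?_
    rintro _ ⟨s, hs, rfl⟩
    obtain ⟨x, hx, htx⟩ : ∃ x, |x| = s ∧ t * x = |t| * s := by
      rcases abs_choice t with ht | ht
      · exact ⟨s, abs_of_nonneg hs, by rw [ht]⟩
      · exact ⟨-s, by rw [abs_neg, abs_of_nonneg hs], by rw [ht]; ring⟩
    have hsub := h x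
    rw [hx, mul_sub, htx] at hsub
    linarith
  linarith

end FenchelConj

section Modular

variable {ι : Type*} [Fintype ι] {w : ι → ℝ} {φ : ℝ → ℝ}

/-- The modular `∑ α, w α * φ |y α|` of the weighted Orlicz space of functions on `ι`: the part of
the primal energy that is convex but not linear. -/
def modular (w : ι → ℝ) (φ : ℝ → ℝ) (y : ι → ℝ) : ℝ :=
  ∑ α, w α * φ |y α|

/-- The modular with integrand `ψ` evaluated at `τ / w`. With `ψ = φ*` it is the Fenchel conjugate
of `modular w φ`; the weights are inverted because the pairing is the unweighted dot product. -/
def conjModular (w : ι → ℝ) (ψ : ℝ → ℝ) (τ : ι → ℝ) : ℝ :=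
  ∑ α, w α * ψ ((w α)⁻¹ * |τ α|)

theorem convexOn_modular (hw : ∀ α, 0 ≤ w α) (hconv : ConvexOn ℝ (Ici 0) φ)
    (hmono : MonotoneOn φ (Ici 0)) : ConvexOn ℝ univ (modular w φ) := by
  have hterm (α : ι) : ConvexOn ℝ univ fun y : ι → ℝ => w α * φ |y α| :=
    ((convexOn_comp_abs hconv hmono).comp_linearMap
      (LinearMap.proj α : (ι → ℝ) →ₗ[ℝ] ℝ)).smul (hw α)
  have hsum : modular w φ = ∑ α, fun y : ι → ℝ => w α * φ |y α| := by
    ext y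
    rw [modular, Finset.sum_apply]
  rw [hsum]
  exact Finset.sum_induction _ (ConvexOn ℝ univ) (fun _ _ => ConvexOn.add)
    (convexOn_const 0 convex_univ) fun α _ => hterm α

theorem dotProduct_le_modular_add_conjModular (hw : ∀ α, 0 < w α)
    (hbdd : ∀ r, BddAbove {x | ∃ s, 0 ≤ s ∧ x = r * s - φ s}) (τ y : ι → ℝ) :
    τ ⬝ᵥ y ≤ modular w φ y + conjModular w (fenchelConj φ) τ := by
  rw [modular, conjModular, ← Finset.sum_add_distrib]
  refine Finset.sum_le_sum fun α _ => ?_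
  calc τ α * y α ≤ |τ α| * |y α| := (le_abs_self _).trans_eq (abs_mul _ _)
    _ = w α * ((w α)⁻¹ * |τ α| * |y α|) := by rw [mul_assoc, mul_inv_cancel_left₀ (hw α).ne']
    _ ≤ w α * (φ |y α| + fenchelConj φ ((w α)⁻¹ * |τ α|)) :=
      mul_le_mul_of_nonneg_left (mul_le_add_fenchelConj (hbdd _) (abs_nonneg _)) (hw α).le
    _ = w α * φ |y α| + w α * fenchelConj φ ((w α)⁻¹ * |τ α|) := mul_add _ _ _

theorem modular_add_conjModular_le_dotProduct (hw : ∀ α, 0 < w α) {τ b : ι → ℝ}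
    (h : ∀ y, modular w φ b + τ ⬝ᵥ (y - b) ≤ modular w φ y) :
    modular w φ b + conjModular w (fenchelConj φ) τ ≤ τ ⬝ᵥ b := by
  have hcoord (α : ι) (x : ℝ) : w α * φ |b α| - τ α * b α ≤ w α * φ |x| - τ α * x := by
    refine le_of_forall_sum_le_sum (G := fun α x => w α * φ |x| - τ α * x) (fun y => ?_) α x
    have hy := h y
    rw [dotProduct_sub] at hy
    simp only [modular, dotProduct] at hy
    simp only [Finset.sum_sub_distrib]
    linarith
  have hscaled (α : ι) : φ |b α| + fenchelConj φ ((w α)⁻¹ * |τ α|) ≤ (w α)⁻¹ * τ α * b α := by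
    have habs : |(w α)⁻¹ * τ α| = (w α)⁻¹ * |τ α| := by
      rw [abs_mul, abs_of_pos (inv_pos.2 (hw α))]
    rw [← habs]
    refine add_fenchelConj_abs_le_of_subgradient fun x => le_of_mul_le_mul_left ?_ (hw α)
    rw [mul_add, mul_assoc, mul_inv_cancel_left₀ (hw α).ne']
    linarith [hcoord α x]
  rw [modular, conjModular, ← Finset.sum_add_distrib]
  refine Finset.sum_le_sum fun α _ => ?_
  calc w α * φ |b α| + w α * fenchelConj φ ((w α)⁻¹ * |τ α|)
      = w α * (φ |b α| + fenchelConj φ ((w α)⁻¹ * |τ α|)) := (mul_add _ _ _).symm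
    _ ≤ w α * ((w α)⁻¹ * τ α * b α) := mul_le_mul_of_nonneg_left (hscaled α) (hw α).le
    _ = τ α * b α := by rw [mul_assoc, mul_inv_cancel_left₀ (hw α).ne']

end Modular

section Duality

variable {N M : ℕ} {w : Fin M → ℝ} {φ : ℝ → ℝ} {B : (Fin N → ℝ) →ₗ[ℝ] (Fin M → ℝ)}
  {V₀ : Submodule ℝ (Fin N → ℝ)} {g f u : Fin N → ℝ}

theorem primalJ_add_dualJ_eq {ψ : ℝ → ℝ} (hu : u ∈ V₀) {τ : Fin M → ℝ} (hτ : τ ∈ SigmaF B V₀ f) :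
    primalJ w φ B f (u + g) + ∑ i, f i * g i + dualJ w ψ B g τ =
      modular w φ (B (u + g)) + conjModular w ψ τ - τ ⬝ᵥ B (u + g) := by
  have hτu : τ ⬝ᵥ B u = f ⬝ᵥ u := hτ u hu
  change modular w φ (B (u + g)) - f ⬝ᵥ (u + g) + f ⬝ᵥ g + (conjModular w ψ τ - τ ⬝ᵥ B g) = _
  rw [dotProduct_add, map_add, dotProduct_add, hτu]
  ring

theorem exists_mem_sigmaF_subgradient (hconv : ConvexOn ℝ (Ici 0) φ)
    (hmono : MonotoneOn φ (Ici 0)) (hw : ∀ α, 0 ≤ w α) (hu : u ∈ V₀)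
    (humin : ∀ v ∈ V₀, primalJ w φ B f (u + g) ≤ primalJ w φ B f (v + g)) :
    ∃ τ ∈ SigmaF B V₀ f, ∀ y,
      modular w φ (B (u + g)) + τ ⬝ᵥ (y - B (u + g)) ≤ modular w φ y := by
  have hmod := convexOn_modular hw hconv hmono
  have hincr (v : V₀) : modular w φ (B (u + g)) + f ⬝ᵥ v ≤ modular w φ (B (u + g) + B v) := by
    have hmin : modular w φ (B (u + g)) - f ⬝ᵥ (u + g) ≤
        modular w φ (B (u + v + g)) - f ⬝ᵥ (u + v + g) := humin _ (V₀.add_mem hu v.2)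
    rw [add_right_comm u, map_add B (u + g), dotProduct_add f (u + g)] at hmin
    linarith
  obtain ⟨ℓ, hℓV, hℓsub⟩ := exists_subgradient_comp_eq hmod hmod.locallyLipschitz.continuous
    (B.comp V₀.subtype) ((dotProductEquiv ℝ (Fin N) f).comp V₀.subtype) hincr
  obtain ⟨τ, hτ⟩ := (dotProductEquiv ℝ (Fin M)).surjective ℓ
  have hτℓ (y : Fin M → ℝ) : τ ⬝ᵥ y = ℓ y := LinearMap.congr_fun hτ y
  exact ⟨τ, fun v hv => (hτℓ _).trans (hℓV ⟨v, hv⟩), fun y => hτℓ _ ▸ hℓsub y⟩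

end Duality

theorem duality_identity_general {N M : ℕ} {φ : ℝ → ℝ} (hconv : ConvexOn ℝ (Ici 0) φ)
    (hmono : MonotoneOn φ (Ici 0))
    (hbdd : ∀ r, BddAbove {x | ∃ s, 0 ≤ s ∧ x = r * s - φ s})
    (B : (Fin N → ℝ) →ₗ[ℝ] (Fin M → ℝ)) (V₀ : Submodule ℝ (Fin N → ℝ))
    (g f : Fin N → ℝ) (w : Fin M → ℝ) (hw : ∀ α, 0 < w α)
    (u : Fin N → ℝ) (hu : u ∈ V₀)
    (humin : ∀ v ∈ V₀, primalJ w φ B f (u + g) ≤ primalJ w φ B f (v + g))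
    (σ : Fin M → ℝ) (hσ : σ ∈ SigmaF B V₀ f)
    (hσmin : ∀ τ ∈ SigmaF B V₀ f,
      dualJ w (fenchelConj φ) B g σ ≤ dualJ w (fenchelConj φ) B g τ) :
    primalJ w φ B f (u + g) + (∑ i, f i * g i) = - dualJ w (fenchelConj φ) B g σ := by
  have hweak := dotProduct_le_modular_add_conjModular hw hbdd σ (B (u + g))
  obtain ⟨τ, hτ, hsub⟩ := exists_mem_sigmaF_subgradient hconv hmono (fun α => (hw α).le) hu humin
  have hstrong := modular_add_conjModular_le_dotProduct hw hsub
  have hgapσ := primalJ_add_dualJ_eq (w := w) (φ := φ) (g := g) (ψ := fenchelConj φ) hu hσ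
  have hgapτ := primalJ_add_dualJ_eq (w := w) (φ := φ) (g := g) (ψ := fenchelConj φ) hu hτ
  exact le_antisymm (by linarith [hσmin τ hτ]) (by linarith)

namespace IsNFunction

variable {φ φ' : ℝ → ℝ}

theorem deriv_mul_sub_le_sub (h : IsNFunction φ φ') {a b : ℝ} (ha : 0 ≤ a) (hab : a ≤ b) :
    φ' a * (b - a) ≤ φ b - φ a := by
  have hint {c d : ℝ} (hc : 0 ≤ c) (hd : 0 ≤ d) : IntervalIntegrable φ' volume c d :=
    (h.deriv_monotoneOn.mono fun _ hx => (le_min hc hd).trans hx.1).intervalIntegrable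
  have hb := ha.trans hab
  calc φ' a * (b - a) = ∫ _ in a..b, φ' a := by
        rw [intervalIntegral.integral_const, smul_eq_mul, mul_comm]
    _ ≤ ∫ s in a..b, φ' s :=
      intervalIntegral.integral_mono_on hab intervalIntegrable_const (hint ha hb) fun _ hx =>
        h.deriv_monotoneOn ha (ha.trans hx.1) hx.1
    _ = φ b - φ a := by
      rw [h.eq_integral a ha, h.eq_integral b hb,
        intervalIntegral.integral_interval_sub_left (hint le_rfl hb) (hint le_rfl ha)]

theorem monotoneOn (h : IsNFunction φ φ') : MonotoneOn φ (Ici 0) := fun a ha _ _ hab =>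
  sub_nonneg.1 <|
    (mul_nonneg (h.deriv_nonneg a ha) (sub_nonneg.2 hab)).trans (h.deriv_mul_sub_le_sub ha hab)

theorem bddAbove_mul_sub (h : IsNFunction φ φ') (r : ℝ) :
    BddAbove {x | ∃ s, 0 ≤ s ∧ x = r * s - φ s} := by
  obtain ⟨T, hrT, hT⟩ := ((h.deriv_tendsto_atTop.eventually_ge_atTop r).and
    (eventually_ge_atTop 0)).exists
  -- Past `T` the map `s ↦ r * s - φ s` is nonincreasing; before `T`, bound `φ` below by `φ 0`.
  refine ⟨max (|r| * T - φ 0) (r * T - φ T), ?_⟩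
  rintro _ ⟨s, hs, rfl⟩
  rcases le_total s T with hsT | hTs
  · have hφ : φ 0 ≤ φ s := h.monotoneOn self_mem_Ici hs hs
    have hrs : r * s ≤ |r| * T := mul_le_mul (le_abs_self r) hsT hs (abs_nonneg r)
    exact le_max_of_le_left (by linarith)
  · have hφ := h.deriv_mul_sub_le_sub hT hTs
    have hslope : r * (s - T) ≤ φ' T * (s - T) := mul_le_mul_of_nonneg_right hrT (sub_nonneg.2 hTs)
    exact le_max_of_le_right (by linarith)

end IsNFunction

/-- duality identity
`J(u_g) + f·g = min_{v∈V₀} J(v+g) + f·g = −min_{τ∈Σ_f} J*(τ) = −J*(σ)`. -/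
theorem duality_identity {N M : ℕ} (φ φ' : ℝ → ℝ) (hφ : IsNFunction φ φ')
    (B : (Fin N → ℝ) →ₗ[ℝ] (Fin M → ℝ)) (V₀ : Submodule ℝ (Fin N → ℝ))
    (hker : ∀ v ∈ V₀, B v = 0 → v = 0)
    (g f : Fin N → ℝ) (w : Fin M → ℝ) (hw : ∀ α, 0 < w α)
    (u : Fin N → ℝ) (hu : u ∈ V₀)
    (humin : ∀ v ∈ V₀, primalJ w φ B f (u + g) ≤ primalJ w φ B f (v + g))
    (σ : Fin M → ℝ) (hσ : σ ∈ SigmaF B V₀ f)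
    (hσmin : ∀ τ ∈ SigmaF B V₀ f,
      dualJ w (fenchelConj φ) B g σ ≤ dualJ w (fenchelConj φ) B g τ) :
    primalJ w φ B f (u + g) + (∑ i, f i * g i) = - dualJ w (fenchelConj φ) B g σ :=
  duality_identity_general hφ.convexOn hφ.monotoneOn hφ.bddAbove_mul_sub B V₀ g f w hw u hu humin σ
    hσ hσmin
end
end

section
/- Let φ be an N-function with Fenchel conjugate φ*. Then the map t ↦ φ'(t)/t is non-decreasing on (0,∞) (i.e. φ'(t)/t ≤ φ'(T)/T for all 0 < t ≤ T) if and only if the map t ↦ (φ*)'(t)/t is non-increasing on (0,∞) (i.e. (φ*)'(t)/t ≥ (φ*)'(T)/T for all 0 < t ≤ T). -/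
open Filter MeasureTheory Set Topology

noncomputable section

/-!
Monotonicity of `φ'(t) / t` says that `φ'` is star-shaped: `φ' (c r) ≤ c φ' r` for `c ∈ [0, 1]`.
Hence scaling by `c` maps the sublevel set of `φ'` at `t` into the one at `c t`, and taking suprema
gives `c (φ*)' t ≤ (φ*)' (c t)`. Conversely, if `φ' T / T < φ' t / t` with `t ≤ T`, any level `s`
with `t φ' T / T < s < φ' t` satisfies `(φ*)' s ≤ t`, whereas `(φ*)' (φ' T) ≥ T`, so that
`(φ*)' s / s < (φ*)' (φ' T) / φ' T` although `s < φ' T`.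
-/

section Order

variable {α β : Type*}

theorem monotoneOn_Ioi_iff [Preorder α] [Preorder β] {f : α → β} {a : α} :
    MonotoneOn f (Ioi a) ↔ ∀ x y, a < x → x ≤ y → f x ≤ f y :=
  ⟨fun h _ _ hx hxy ↦ h hx (hx.trans_le hxy) hxy, fun h _ hx _ _ hxy ↦ h _ _ hx hxy⟩

theorem antitoneOn_Ioi_iff [Preorder α] [Preorder β] {f : α → β} {a : α} :
    AntitoneOn f (Ioi a) ↔ ∀ x y, a < x → x ≤ y → f y ≤ f x :=
  monotoneOn_Ioi_iff (β := βᵒᵈ)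

theorem bddAbove_setOf_le_of_tendsto_atTop [LinearOrder α] [Nonempty α] [Preorder β]
    [NoMaxOrder β] {f : α → β} (hf : Tendsto f atTop atTop) (b : β) :
    BddAbove {a | f a ≤ b} := by
  obtain ⟨M, hM⟩ := eventually_atTop.1 (hf.eventually_gt_atTop b)
  exact ⟨M, fun a ha ↦ le_of_not_gt fun hMa ↦ (hM a hMa.le).not_ge ha⟩

end Order

theorem map_mul_le_mul_of_monotoneOn_div {K : Type*} [Field K] [LinearOrder K]
    [IsStrictOrderedRing K] {f : K → K} {c r : K} (hf : MonotoneOn (fun t ↦ f t / t) (Ioi 0))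
    (hf₀ : f 0 ≤ 0) (hc : 0 ≤ c) (hc₁ : c ≤ 1) (hr : 0 ≤ r) : f (c * r) ≤ c * f r := by
  rcases hc.eq_or_lt with rfl | hc
  · simpa only [zero_mul] using hf₀
  rcases hr.eq_or_lt with rfl | hr
  · simpa only [mul_zero] using le_mul_of_le_one_left hf₀ hc₁
  have hcr : 0 < c * r := mul_pos hc hr
  have hquot : f (c * r) / (c * r) ≤ f r / r := hf hcr hr (mul_le_of_le_one_left hr.le hc₁)
  calc
    f (c * r) ≤ f r / r * (c * r) := (div_le_iff₀ hcr).1 hquot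
    _ = c * f r := by field_simp

section RcInv

variable {f : ℝ → ℝ} {c r s t : ℝ}

theorem le_rcInv (hf : Tendsto f atTop atTop) (hr : 0 ≤ r) (h : f r ≤ t) : r ≤ rcInv f t :=
  le_csSup ((bddAbove_setOf_le_of_tendsto_atTop hf t).mono fun _ ↦ And.right) ⟨hr, h⟩

theorem rcInv_le (hf₀ : f 0 ≤ t) (h : ∀ r, 0 ≤ r → f r ≤ t → r ≤ s) : rcInv f t ≤ s :=
  csSup_le ⟨0, le_rfl, hf₀⟩ fun r hr ↦ h r hr.1 hr.2

theorem rcInv_le_of_lt (hf : MonotoneOn f (Ici 0)) (hf₀ : f 0 ≤ s) (ht : 0 ≤ t) (h : s < f t) :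
    rcInv f s ≤ t :=
  rcInv_le hf₀ fun _ hr hrs ↦ le_of_not_ge fun htr ↦ (h.trans_le (hf ht hr htr)).not_ge hrs

theorem mul_rcInv_le_rcInv_mul (hf : Tendsto f atTop atTop) (hf₀ : f 0 ≤ t) (hc : 0 < c)
    (hfc : ∀ r, 0 ≤ r → f (c * r) ≤ c * f r) : c * rcInv f t ≤ rcInv f (c * t) := by
  rw [← le_div_iff₀' hc]
  refine rcInv_le hf₀ fun r hr hrt ↦ (le_div_iff₀' hc).2 (le_rcInv hf (by positivity) ?_)
  exact (hfc r hr).trans (by gcongr)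

theorem antitoneOn_rcInv_div (hf : Tendsto f atTop atTop) (hf₀ : f 0 ≤ 0)
    (hdiv : MonotoneOn (fun t ↦ f t / t) (Ioi 0)) :
    AntitoneOn (fun t ↦ rcInv f t / t) (Ioi 0) := by
  intro t (ht : 0 < t) T (hT : 0 < T) htT
  have hc : 0 < t / T := div_pos ht hT
  have hscale : t / T * rcInv f T ≤ rcInv f t := by
    simpa only [div_mul_cancel₀ t hT.ne'] using
      mul_rcInv_le_rcInv_mul hf (hf₀.trans hT.le) hc fun r hr ↦
        map_mul_le_mul_of_monotoneOn_div hdiv hf₀ hc.le (div_le_one_of_le₀ htT hT.le) hr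
  calc
    rcInv f T / T = t / T * rcInv f T / t := by field_simp
    _ ≤ rcInv f t / t := by gcongr

theorem monotoneOn_div_of_antitoneOn_rcInv_div (hmono : MonotoneOn f (Ici 0))
    (hf : Tendsto f atTop atTop) (hf₀ : f 0 ≤ 0)
    (hdiv : AntitoneOn (fun t ↦ rcInv f t / t) (Ioi 0)) :
    MonotoneOn (fun t ↦ f t / t) (Ioi 0) := by
  intro t (ht : 0 < t) T (hT : 0 < T) htT
  have hfle : f t ≤ f T := hmono ht.le hT.le htT
  rcases le_or_gt (f t) 0 with hft | hft
  · calc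
      f t / t ≤ f t / T := by
        simpa only [neg_div, neg_le_neg_iff] using
          div_le_div_of_nonneg_left (neg_nonneg.2 hft) ht htT
      _ ≤ f T / T := by gcongr
  have hfT : 0 < f T := hft.trans_le hfle
  by_contra! hlt
  have hgap : f T / T * t < f t := (lt_div_iff₀ ht).1 hlt
  obtain ⟨s, hgt, hst⟩ := exists_between hgap
  have hs : 0 < s := lt_trans (by positivity) hgt
  have hcontra : T / f T < T / f T :=
    calc
      T / f T ≤ rcInv f (f T) / f T := by
        gcongr
        exact le_rcInv hf hT.le le_rfl
      _ ≤ rcInv f s / s := hdiv hs hfT (hst.le.trans hfle)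
      _ ≤ t / s := by
        gcongr
        exact rcInv_le_of_lt hmono (hf₀.trans hs.le) ht.le hst
      _ < T / f T := by
        rw [div_mul_eq_mul_div, div_lt_iff₀ hT] at hgt
        rw [div_lt_div_iff₀ hs hfT]
        linarith
  exact hcontra.false

theorem monotone_quotient_iff_general (hmono : MonotoneOn f (Ici 0))
    (hf : Tendsto f atTop atTop) (hf₀ : f 0 ≤ 0) :
    MonotoneOn (fun t ↦ f t / t) (Ioi 0) ↔ AntitoneOn (fun t ↦ rcInv f t / t) (Ioi 0) :=
  ⟨antitoneOn_rcInv_div hf hf₀, monotoneOn_div_of_antitoneOn_rcInv_div hmono hf hf₀⟩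

end RcInv

/-- `t ↦ φ'(t)/t` is non-decreasing on `(0,∞)` iff
`t ↦ (φ*)'(t)/t` is non-increasing on `(0,∞)`. -/
theorem monotone_quotient_iff (φ φ' : ℝ → ℝ) (hφ : IsNFunction φ φ') :
    (∀ t T : ℝ, 0 < t → t ≤ T → φ' t / t ≤ φ' T / T) ↔
    (∀ t T : ℝ, 0 < t → t ≤ T → rcInv φ' T / T ≤ rcInv φ' t / t) := by
  simpa only [monotoneOn_Ioi_iff, antitoneOn_Ioi_iff] using monotone_quotient_iff_general
    hφ.deriv_monotoneOn hφ.deriv_tendsto_atTop hφ.deriv_zero.le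
end
end

section
/- Let φ be an N-function with Fenchel conjugate φ* such that the map ψ(t) := (φ*)'(t)/t is non-increasing on (0,∞). Then for all s, t > 0 one has the scalar inequality (1/2)·ψ(t)·t² − φ*(t) ≤ (1/2)·ψ(t)·s² − φ*(s); equivalently, s = t minimizes s ↦ (1/2)ψ(t)s² − φ*(s) over s > 0. -/
open Filter MeasureTheory Set Topology

noncomputable section

/-!
For every `t` the value `(φ')⁻¹(t)` maximizes `s ↦ t * s - φ s`, because `t - φ'` changes sign
there; hence `g := (φ')⁻¹` selects subgradients of the convex function `φ*`. A subgradient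
selection is non-decreasing, and a non-decreasing `g` with `g t / t` non-increasing cannot jump,
so `φ*` is differentiable on `(0,∞)` with derivative `g`. With `ψ t = g t / t`, the derivative of
`s ↦ ψ t * s ^ 2 / 2 - φ* s` is `(ψ t - ψ s) * s`, which is nonpositive for `s < t` and
nonnegative for `s > t`.
-/

theorem rcInv_nonneg (f : ℝ → ℝ) (t : ℝ) : 0 ≤ rcInv f t :=
  Real.sSup_nonneg fun _ hr ↦ hr.1

theorem le_of_lt_rcInv {f : ℝ → ℝ} {t x : ℝ} (hf : MonotoneOn f (Ici 0)) (hx : 0 ≤ x)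
    (hxt : x < rcInv f t) : f x ≤ t := by
  have hne : {r : ℝ | 0 ≤ r ∧ f r ≤ t}.Nonempty := by
    by_contra hempty
    rw [rcInv, not_nonempty_iff_eq_empty.mp hempty, Real.sSup_empty] at hxt
    exact hx.not_gt hxt
  obtain ⟨y, ⟨hy, hfy⟩, hxy⟩ := exists_lt_of_lt_csSup hne hxt
  exact (hf hx hy hxy.le).trans hfy

theorem bddAbove_setOf_le_of_tendsto_atTop_s11 {f : ℝ → ℝ} (hf : Tendsto f atTop atTop) (t : ℝ) :
    BddAbove {r : ℝ | f r ≤ t} := by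
  obtain ⟨M, hM⟩ := eventually_atTop.mp (hf.eventually_gt_atTop t)
  exact ⟨M, fun r hr ↦ le_of_not_ge fun hMr ↦ (hM r hMr).not_ge hr⟩

theorem lt_of_rcInv_lt {f : ℝ → ℝ} {t x : ℝ} (hf : Tendsto f atTop atTop) (hx : 0 ≤ x)
    (htx : rcInv f t < x) : t < f x := by
  by_contra! hfx
  have hbdd : BddAbove {r : ℝ | 0 ≤ r ∧ f r ≤ t} :=
    (bddAbove_setOf_le_of_tendsto_atTop_s11 hf t).mono fun _ hr ↦ hr.2
  exact htx.not_ge (le_csSup hbdd ⟨hx, hfx⟩)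

theorem mul_sub_le_integral_of_crossing {f : ℝ → ℝ} {c s t : ℝ}
    (hf : IntervalIntegrable f volume c s) (hleft : ∀ x ∈ Ioo s c, f x ≤ t)
    (hright : ∀ x ∈ Ioo c s, t ≤ f x) : t * (s - c) ≤ ∫ x in c..s, f x := by
  rcases le_total c s with hcs | hsc
  · calc t * (s - c) = ∫ _ in c..s, t := by simp [mul_comm]
      _ ≤ ∫ x in c..s, f x :=
        intervalIntegral.integral_mono_on_of_le_Ioo hcs (by simp) hf hright
  · have hle : ∫ x in s..c, f x ≤ ∫ _ in s..c, t :=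
      intervalIntegral.integral_mono_on_of_le_Ioo hsc hf.symm (by simp) hleft
    rw [intervalIntegral.integral_const, smul_eq_mul] at hle
    rw [intervalIntegral.integral_symm]
    linarith

-- When `φ' > t` on all of `[0,∞)`, the junk value `sSup ∅ = 0` is the maximizer.
theorem isMaxOn_mul_sub_rcInv {φ φ' : ℝ → ℝ} (hmono : MonotoneOn φ' (Ici 0))
    (htop : Tendsto φ' atTop atTop) (hφ : ∀ s : ℝ, 0 ≤ s → φ s = ∫ x in (0 : ℝ)..s, φ' x)
    (t : ℝ) : IsMaxOn (fun s ↦ t * s - φ s) (Ici 0) (rcInv φ' t) := by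
  intro s hs
  have hc := rcInv_nonneg φ' t
  have hint {a b : ℝ} (ha : 0 ≤ a) (hb : 0 ≤ b) : IntervalIntegrable φ' volume a b :=
    (hmono.mono fun _ hx ↦ (le_min ha hb).trans hx.1).intervalIntegrable
  have hsub : φ s - φ (rcInv φ' t) = ∫ x in (rcInv φ' t)..s, φ' x := by
    rw [hφ s hs, hφ _ hc, intervalIntegral.integral_interval_sub_left (hint le_rfl hs)
      (hint le_rfl hc)]
  have hle : t * (s - rcInv φ' t) ≤ ∫ x in (rcInv φ' t)..s, φ' x :=
    mul_sub_le_integral_of_crossing (hint hc hs)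
      (fun x hx ↦ le_of_lt_rcInv hmono (hs.trans hx.1.le) hx.2)
      (fun x hx ↦ (lt_of_rcInv_lt htop (hc.trans hx.1.le) hx.1).le)
  change t * s - φ s ≤ t * rcInv φ' t - φ (rcInv φ' t)
  linarith

/-- `g` selects a subgradient of `f` at each point of `s`, tested only against points of `s`:
`g x ∈ ∂(f|ₛ)(x)`. -/
def IsSubgradientOn (f g : ℝ → ℝ) (s : Set ℝ) : Prop :=
  ∀ ⦃x⦄, x ∈ s → ∀ ⦃y⦄, y ∈ s → g x * (y - x) ≤ f y - f x

namespace IsSubgradientOn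

variable {f g : ℝ → ℝ} {s : Set ℝ}

theorem monotoneOn (h : IsSubgradientOn f g s) : MonotoneOn g s := by
  intro x hx y hy hxy
  rcases hxy.eq_or_lt with rfl | hlt
  · rfl
  · have hx_le := h hx hy
    have hy_le := h hy hx
    exact le_of_mul_le_mul_right (by linarith) (sub_pos.mpr hlt)

theorem hasDerivAt {x : ℝ} (h : IsSubgradientOn f g s) (hs : s ∈ 𝓝 x) (hg : ContinuousAt g x) :
    HasDerivAt f (g x) x := by
  have hbound : ∀ᶠ y in 𝓝 x,
      ‖f y - f x - (y - x) • g x‖ ≤ ‖(g y - g x) * (y - x)‖ := by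
    filter_upwards [hs] with y hy
    have hx_le := h (mem_of_mem_nhds hs) hy
    have hy_le := h hy (mem_of_mem_nhds hs)
    rw [smul_eq_mul]
    exact abs_le_abs_of_nonneg (by linarith) (by linarith)
  have hsmall : (fun y ↦ (g y - g x) * (y - x)) =o[𝓝 x] fun y ↦ y - x := by
    simpa using ((Asymptotics.isLittleO_one_iff ℝ).mpr
      (tendsto_sub_nhds_zero_iff.mpr hg)).mul_isBigO (Asymptotics.isBigO_refl (· - x) (𝓝 x))
  exact hasDerivAt_iff_isLittleO.mpr ((Asymptotics.IsBigO.of_bound' hbound).trans_isLittleO hsmall)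

end IsSubgradientOn

theorem fenchelConj_eq_of_isMaxOn {φ : ℝ → ℝ} {r s : ℝ} (hs : 0 ≤ s)
    (hmax : IsMaxOn (fun x ↦ r * x - φ x) (Ici 0) s) : fenchelConj φ r = r * s - φ s := by
  refine IsGreatest.csSup_eq ⟨⟨s, hs, rfl⟩, ?_⟩
  rintro _ ⟨x, hx, rfl⟩
  exact hmax hx

theorem isSubgradientOn_fenchelConj {φ g : ℝ → ℝ} {s : Set ℝ} (hg : ∀ r ∈ s, 0 ≤ g r)
    (hmax : ∀ r ∈ s, IsMaxOn (fun x ↦ r * x - φ x) (Ici 0) (g r)) :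
    IsSubgradientOn (fenchelConj φ) g s := by
  intro r hr q hq
  have hle : q * g r - φ (g r) ≤ q * g q - φ (g q) := hmax q hq (hg r hr)
  rw [fenchelConj_eq_of_isMaxOn (hg r hr) (hmax r hr),
    fenchelConj_eq_of_isMaxOn (hg q hq) (hmax q hq)]
  linarith

theorem continuousAt_of_monotoneOn_of_antitoneOn_div {g : ℝ → ℝ} {t : ℝ}
    (hg : MonotoneOn g (Ioi 0)) (hdiv : AntitoneOn (fun x ↦ g x / x) (Ioi 0)) (ht : 0 < t) :
    ContinuousAt g t := by
  -- Near `t`, `g` lies between the constant `g t` and the chord `x ↦ g t / t * x`.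
  have hchord : Tendsto (fun x ↦ g t / t * x) (𝓝 t) (𝓝 (g t)) := by
    have hlim : Tendsto (fun x ↦ g t / t * x) (𝓝 t) (𝓝 (g t / t * t)) :=
      tendsto_id.const_mul (g t / t)
    rwa [div_mul_cancel₀ _ ht.ne'] at hlim
  have hmin : Tendsto (fun x ↦ min (g t) (g t / t * x)) (𝓝 t) (𝓝 (g t)) := by
    simpa using (tendsto_const_nhds (x := g t)).min hchord
  have hmax : Tendsto (fun x ↦ max (g t) (g t / t * x)) (𝓝 t) (𝓝 (g t)) := by
    simpa using (tendsto_const_nhds (x := g t)).max hchord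
  refine tendsto_of_tendsto_of_tendsto_of_le_of_le' hmin hmax ?_ ?_
  · filter_upwards [lt_mem_nhds ht] with x hx
    rcases le_total t x with htx | hxt
    · exact min_le_of_left_le (hg ht hx htx)
    · exact min_le_of_right_le ((le_div_iff₀ hx).mp (hdiv hx ht hxt))
  · filter_upwards [lt_mem_nhds ht] with x hx
    rcases le_total t x with htx | hxt
    · exact le_max_of_le_right ((div_le_iff₀ hx).mp (hdiv ht hx htx))
    · exact le_max_of_le_left (hg hx ht hxt)

theorem isMinOn_half_mul_sq_sub {F f : ℝ → ℝ} {t : ℝ}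
    (hF : ∀ x : ℝ, 0 < x → HasDerivAt F (f x) x)
    (hf : AntitoneOn (fun x ↦ f x / x) (Ioi 0)) (ht : 0 < t) :
    IsMinOn (fun s ↦ (1 / 2) * (f t / t) * s ^ 2 - F s) (Ioi 0) t := by
  have hderiv (x : ℝ) (hx : 0 < x) :
      HasDerivAt (fun s ↦ (1 / 2) * (f t / t) * s ^ 2 - F s) ((f t / t - f x / x) * x) x := by
    refine (((hasDerivAt_pow 2 x).const_mul _).sub (hF x hx)).congr_deriv ?_
    field_simp
    ring
  refine isMinOn_Ioi_of_deriv (hderiv t ht).continuousAt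
    (fun x hx ↦ (hderiv x hx.1).differentiableAt.differentiableWithinAt)
    (fun x hx ↦ (hderiv x (ht.trans hx)).differentiableAt.differentiableWithinAt)
    (fun x hx ↦ ?_) (fun x hx ↦ ?_)
  · rw [(hderiv x hx.1).deriv]
    exact mul_nonpos_of_nonpos_of_nonneg (sub_nonpos.mpr (hf hx.1 ht hx.2.le)) hx.1.le
  · have hx₀ : 0 < x := ht.trans hx
    rw [(hderiv x hx₀).deriv]
    exact mul_nonneg (sub_nonneg.mpr (hf ht hx₀ hx.le)) hx₀.le

theorem quadratic_relaxation_scalar_general {φ φ' : ℝ → ℝ} (hmono : MonotoneOn φ' (Ici 0))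
    (htop : Tendsto φ' atTop atTop) (hφ : ∀ s : ℝ, 0 ≤ s → φ s = ∫ x in (0 : ℝ)..s, φ' x)
    (hψ : AntitoneOn (fun t ↦ rcInv φ' t / t) (Ioi 0)) {t : ℝ} (ht : 0 < t) :
    IsMinOn (fun s ↦ (1 / 2) * (rcInv φ' t / t) * s ^ 2 - fenchelConj φ s) (Ioi 0) t := by
  have hsub : IsSubgradientOn (fenchelConj φ) (rcInv φ') (Ioi 0) :=
    isSubgradientOn_fenchelConj (fun r _ ↦ rcInv_nonneg φ' r)
      (fun r _ ↦ isMaxOn_mul_sub_rcInv hmono htop hφ r)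
  have hderiv (x : ℝ) (hx : 0 < x) : HasDerivAt (fenchelConj φ) (rcInv φ' x) x :=
    hsub.hasDerivAt (Ioi_mem_nhds hx)
      (continuousAt_of_monotoneOn_of_antitoneOn_div hsub.monotoneOn hψ hx)
  exact isMinOn_half_mul_sq_sub hderiv hψ ht

/-- if `ψ(t) = (φ*)'(t)/t` is non-increasing on `(0,∞)`, then for
all `s, t > 0` one has `(1/2)ψ(t)t² − φ*(t) ≤ (1/2)ψ(t)s² − φ*(s)`. -/
theorem quadratic_relaxation_scalar (φ φ' : ℝ → ℝ) (hφ : IsNFunction φ φ')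
    (hmono : ∀ t T : ℝ, 0 < t → t ≤ T → rcInv φ' T / T ≤ rcInv φ' t / t) :
    ∀ s t : ℝ, 0 < s → 0 < t →
      (1/2) * (rcInv φ' t / t) * t ^ 2 - fenchelConj φ t ≤
      (1/2) * (rcInv φ' t / t) * s ^ 2 - fenchelConj φ s := by
  intro s t hs ht
  exact quadratic_relaxation_scalar_general hφ.deriv_monotoneOn hφ.deriv_tendsto_atTop
    hφ.eq_integral (fun x hx y _ hxy ↦ hmono x y hx hxy) ht hs
end
end

section
/- Let φ be a uniformly convex N-function with uniform convexity constants 0 < c₁ ≤ C₁ such that t ↦ φ'(t)/t is non-decreasing on (0,∞) and bounded in the sense that 0 < c_φ := lim_{t↘0} φ'(t)/t ≤ lim_{T→∞} φ'(T)/T =: C_φ < ∞. Let B: ℝᴺ → ℝᴹ be linear, V₀ ⊆ ℝᴺ a linear subspace with ker(B) ∩ V₀ = {0}, g ∈ ℝᴺ, f ∈ ℝᴺ, w ∈ (0,∞)ᴹ, and σ⁰ ∈ Σ_f. Suppose the sequences (σⁿ) ⊂ ℝᴹ and (uⁿ) ⊂ V₀ satisfy for each n ∈ ℕ₀ the dual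 IRLS saddle-point system: Σ_α ((φ*)'(w_α⁻¹|σⁿ_α|)/|σⁿ_α|)·σⁿ⁺¹_α τ_α − τᵀB(uⁿ⁺¹+g) = 0 for all τ ∈ ℝᴹ, and (σⁿ⁺¹)ᵀBv = f·v for all v ∈ V₀, where the weight at σⁿ_α = 0 is the right limit lim_{t↘0}(φ*)'(w_α⁻¹t)/t. Then the scheme is well-defined, σⁿ ∈ Σ_f for all n, and there exists a constant C_uc < ∞ depending only on c₁ and C₁ such that with κ := c_φ/(4 C_uc C_φ) ∈ (0,1) one has J*(σⁿ) − J*(σ) ≤ (1−κ)ⁿ (J*(σ⁰) − J*(σ)) for all n ∈ ℕ₀, where σ minimizes J* over Σ_f. -/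
/-!
The weight of the scheme at `x = σⁿ_α` is the inverse of `w m`, where `m = φ'(t)/t` at the point
`t` with `φ'(t) = |x|/w`. Since `φ'(t)/t` is non-decreasing, the parabola `m s²/2`, shifted to touch
`φ` at `t`, lies below `φ` on `[0,∞)`; conjugation reverses the order, so the quadratic energy
minimized by `σⁿ⁺¹` majorizes `J*` and touches it at `σⁿ`. In the other direction, `φ'` is Lipschitz
with constant `K = C₁ C_φ`, so `J*` is strongly convex with modulus `1/(K w)` in each coordinate.
The majorant has curvature `1/(w m) ≤ 1/(w c_φ)`. Comparing its minimizer over `Σ_f` with the point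
`σⁿ + κ (τ - σⁿ)`, where `τ ∈ Σ_f` and `κ K ≤ c_φ`, shows that the gap `J* - J*(τ)` shrinks by the
factor `1 - κ`.
-/

open Filter MeasureTheory Set Topology

noncomputable section

/-- Quotient `(φ*)'(w_α⁻¹|t|)/|t|`, interpreted at `t = 0` as the prescribed
right limit `L_α`. -/
def quotW (φ' : ℝ → ℝ) (wα Lα t : ℝ) : ℝ :=
  if t = 0 then Lα else rcInv φ' (wα⁻¹ * |t|) / |t|

lemma le_of_monotoneOn_of_tendsto_nhdsGT {α β : Type*} [LinearOrder α] [TopologicalSpace α]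
    [OrderTopology α] [DenselyOrdered α] [Preorder β] [TopologicalSpace β] [ClosedIicTopology β]
    {f : α → β} {a t : α} {l : β} (hf : MonotoneOn f (Ioi a)) (hl : Tendsto f (𝓝[>] a) (𝓝 l))
    (ht : a < t) : l ≤ f t :=
  have := nhdsGT_neBot_of_exists_gt ⟨t, ht⟩
  le_of_tendsto hl <| by
    filter_upwards [Ioo_mem_nhdsGT ht] with x hx using hf hx.1 ht hx.2.le

lemma le_of_monotoneOn_of_tendsto_atTop {α β : Type*} [Preorder α] [IsDirectedOrder α] [Preorder β]
    [TopologicalSpace β] [ClosedIciTopology β] {f : α → β} {a t : α} {l : β}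
    (hf : MonotoneOn f (Ioi a)) (hl : Tendsto f atTop (𝓝 l)) (ht : a < t) : f t ≤ l :=
  have : Nonempty α := ⟨t⟩
  ge_of_tendsto hl <| by
    filter_upwards [eventually_ge_atTop t] with x hx using hf ht (ht.trans_le hx) hx

lemma intervalIntegral_le_of_crossing {p q : ℝ → ℝ} {t s : ℝ}
    (hp : IntervalIntegrable p volume t s) (hq : IntervalIntegrable q volume t s)
    (hleft : ∀ x ∈ Icc s t, q x ≤ p x) (hright : ∀ x ∈ Icc t s, p x ≤ q x) :
    ∫ x in t..s, p x ≤ ∫ x in t..s, q x := by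
  rcases le_total t s with hts | hst
  · exact intervalIntegral.integral_mono_on hts hp hq hright
  · rw [intervalIntegral.integral_symm s t, intervalIntegral.integral_symm s t, neg_le_neg_iff]
    exact intervalIntegral.integral_mono_on hst hq.symm hp.symm hleft

lemma rcInv_apply {ψ : ℝ → ℝ} (hψ : StrictMonoOn ψ (Ici 0)) {t : ℝ} (ht : 0 ≤ t) :
    rcInv ψ (ψ t) = t := by
  have sublevel : {r : ℝ | 0 ≤ r ∧ ψ r ≤ ψ t} = Icc 0 t := by
    ext r
    exact and_congr_right fun hr => hψ.le_iff_le hr ht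
  rw [rcInv, sublevel, csSup_Icc ht]

namespace IsNFunction

variable {φ φ' : ℝ → ℝ} {s t : ℝ}

lemma intervalIntegrable_deriv (h : IsNFunction φ φ') (ht : 0 ≤ t) (hs : 0 ≤ s) :
    IntervalIntegrable φ' volume t s :=
  (h.deriv_monotoneOn.mono fun _ hx => (le_inf ht hs).trans hx.1).intervalIntegrable

lemma integral_deriv (h : IsNFunction φ φ') (ht : 0 ≤ t) (hs : 0 ≤ s) :
    ∫ x in t..s, φ' x = φ s - φ t := by
  rw [h.eq_integral s hs, h.eq_integral t ht, intervalIntegral.integral_interval_sub_left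
    (h.intervalIntegrable_deriv le_rfl hs) (h.intervalIntegrable_deriv le_rfl ht)]

lemma add_deriv_mul_sub_le (h : IsNFunction φ φ') (ht : 0 ≤ t) (hs : 0 ≤ s) :
    φ t + φ' t * (s - t) ≤ φ s := by
  have crossing : ∫ _ in t..s, φ' t ≤ ∫ x in t..s, φ' x :=
    intervalIntegral_le_of_crossing intervalIntegrable_const (h.intervalIntegrable_deriv ht hs)
      (fun x hx => h.deriv_monotoneOn (hs.trans hx.1) ht hx.2)
      (fun x hx => h.deriv_monotoneOn ht (ht.trans hx.1) hx.1)
  rw [h.integral_deriv ht hs, intervalIntegral.integral_const, smul_eq_mul] at crossing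
  linarith

lemma le_add_deriv_mul_sub_add_sq (h : IsNFunction φ φ') {K : NNReal}
    (hK : LipschitzOnWith K φ' (Ici 0)) (ht : 0 ≤ t) (hs : 0 ≤ s) :
    φ s ≤ φ t + φ' t * (s - t) + K / 2 * (s - t) ^ 2 := by
  have crossing : ∫ x in t..s, φ' x ≤ ∫ x in t..s, (φ' t + K * (x - t)) := by
    refine intervalIntegral_le_of_crossing (h.intervalIntegrable_deriv ht hs)
      (Continuous.intervalIntegrable (by fun_prop) _ _) (fun x hx => ?_) (fun x hx => ?_)
    · have lip := hK.le_add_mul (x := t) ht (y := x) (hs.trans hx.1)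
      rw [Real.dist_eq, abs_of_nonneg (sub_nonneg.2 hx.2)] at lip
      linarith
    · have lip := hK.le_add_mul (x := x) (ht.trans hx.1) (y := t) ht
      rwa [Real.dist_eq, abs_of_nonneg (sub_nonneg.2 hx.1)] at lip
  have integral_affine :
      ∫ x in t..s, (φ' t + K * (x - t)) = φ' t * (s - t) + K / 2 * (s - t) ^ 2 := by
    rw [intervalIntegral.integral_add intervalIntegrable_const
      (Continuous.intervalIntegrable (by fun_prop) _ _), intervalIntegral.integral_const,
      intervalIntegral.integral_const_mul, intervalIntegral.integral_comp_sub_right (fun x => x) t,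
      integral_id, smul_eq_mul]
    ring
  rw [h.integral_deriv ht hs, integral_affine] at crossing
  linarith

lemma deriv_le_lipschitz_mul (h : IsNFunction φ φ') {K : NNReal}
    (hK : LipschitzOnWith K φ' (Ici 0)) (ht : 0 ≤ t) : φ' t ≤ K * t := by
  have lip := hK.le_add_mul (x := t) ht (y := 0) self_mem_Ici
  rwa [h.deriv_zero, zero_add, Real.dist_eq, sub_zero, abs_of_nonneg ht] at lip

lemma lipschitz_pos (h : IsNFunction φ φ') {K : NNReal} (hK : LipschitzOnWith K φ' (Ici 0)) :
    0 < (K : ℝ) := by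
  simpa only [mul_one] using
    (h.deriv_pos 1 one_pos).trans_le (h.deriv_le_lipschitz_mul hK zero_le_one)

lemma exists_deriv_eq (h : IsNFunction φ φ') (hcont : ContinuousOn φ' (Ici 0)) {r : ℝ}
    (hr : 0 ≤ r) : ∃ t, 0 ≤ t ∧ φ' t = r :=
  isPreconnected_Ici.intermediate_value_Ici self_mem_Ici (le_principal_iff.2 (Ici_mem_atTop 0))
    hcont h.deriv_tendsto_atTop (h.deriv_zero.trans_le hr)

lemma fenchelConj_deriv (h : IsNFunction φ φ') (ht : 0 ≤ t) :
    fenchelConj φ (φ' t) = φ' t * t - φ t := by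
  have attained : IsGreatest {x : ℝ | ∃ s : ℝ, 0 ≤ s ∧ x = φ' t * s - φ s} (φ' t * t - φ t) := by
    refine ⟨⟨t, ht, rfl⟩, ?_⟩
    rintro x ⟨s, hs, rfl⟩
    linarith [h.add_deriv_mul_sub_le ht hs]
  exact attained.csSup_eq

lemma mul_sub_le_fenchelConj (h : IsNFunction φ φ') (q : ℝ) (hs : 0 ≤ s) :
    q * s - φ s ≤ fenchelConj φ q := by
  obtain ⟨t, hqt, ht⟩ :=
    ((h.deriv_tendsto_atTop.eventually_ge_atTop q).and (eventually_ge_atTop 0)).exists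
  refine le_csSup ⟨φ' t * t - φ t, ?_⟩ ⟨s, hs, rfl⟩
  rintro x ⟨r, hr, rfl⟩
  linarith [h.add_deriv_mul_sub_le ht hr, mul_le_mul_of_nonneg_right hqt hr]

lemma fenchelConj_deriv_add_le (h : IsNFunction φ φ') {K : NNReal}
    (hK : LipschitzOnWith K φ' (Ici 0)) (ht : 0 ≤ t) {q : ℝ} (hq : 0 ≤ q) :
    fenchelConj φ (φ' t) + t * (q - φ' t) + (q - φ' t) ^ 2 / (2 * K) ≤ fenchelConj φ q := by
  have hK0 : 0 < (K : ℝ) := h.lipschitz_pos hK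
  -- The maximizer of `q * s` minus the quadratic upper bound of `φ` around `t`.
  set s := t + (q - φ' t) / K with s_def
  have hs : 0 ≤ s := by
    have : s = (K * t - φ' t + q) / K := by rw [s_def]; field_simp; ring
    rw [this]
    exact div_nonneg (by linarith [h.deriv_le_lipschitz_mul hK ht]) hK0.le
  have value_at_s : q * s - (φ t + φ' t * (s - t) + K / 2 * (s - t) ^ 2) =
      φ' t * t - φ t + t * (q - φ' t) + (q - φ' t) ^ 2 / (2 * K) := by
    rw [s_def]
    field_simp
    ring
  rw [h.fenchelConj_deriv ht]
  linarith [h.mul_sub_le_fenchelConj q hs, h.le_add_deriv_mul_sub_add_sq hK ht hs]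

lemma strictMonoOn_deriv (h : IsNFunction φ φ')
    (hmono : MonotoneOn (fun t => φ' t / t) (Ioi 0)) : StrictMonoOn φ' (Ici 0) := by
  intro t ht s _ hts
  have hs : 0 < s := (mem_Ici.1 ht).trans_lt hts
  rcases (mem_Ici.1 ht).eq_or_lt with rfl | ht
  · exact h.deriv_zero.trans_lt (h.deriv_pos s hs)
  calc φ' t = φ' t / t * t := (div_mul_cancel₀ _ ht.ne').symm
    _ ≤ φ' s / s * t := mul_le_mul_of_nonneg_right (hmono ht hs hts.le) ht.le
    _ < φ' s / s * s := mul_lt_mul_of_pos_left hts (div_pos (h.deriv_pos s hs) hs)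
    _ = φ' s := div_mul_cancel₀ _ hs.ne'

lemma one_le_of_slope_le (h : IsNFunction φ φ') {C₁ : ℝ}
    (hC₁ : ∀ t s : ℝ, 0 ≤ t → t < s → (φ' t - φ' s) / (t - s) ≤ C₁ * (φ' s / s)) : 1 ≤ C₁ := by
  have slope := hC₁ 0 1 le_rfl one_pos
  rw [h.deriv_zero, zero_sub, zero_sub, neg_div_neg_eq, div_one] at slope
  exact le_of_mul_le_mul_right (by rwa [one_mul]) (h.deriv_pos 1 one_pos)

lemma lipschitzOnWith_deriv (h : IsNFunction φ φ') {C₁ C : ℝ}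
    (hC₁ : ∀ t s : ℝ, 0 ≤ t → t < s → (φ' t - φ' s) / (t - s) ≤ C₁ * (φ' s / s))
    (hC : ∀ t, 0 < t → φ' t / t ≤ C) : LipschitzOnWith (C₁ * C).toNNReal φ' (Ici 0) := by
  have hC₁0 : 0 ≤ C₁ := zero_le_one.trans (h.one_le_of_slope_le hC₁)
  have hC0 : 0 ≤ C := (div_pos (h.deriv_pos 1 one_pos) one_pos).le.trans (hC 1 one_pos)
  refine LipschitzOnWith.of_le_add_mul' _ fun s hs t ht => ?_
  rcases le_or_gt s t with hst | hts
  · exact (h.deriv_monotoneOn hs ht hst).trans <| le_add_of_nonneg_right <|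
      mul_nonneg (mul_nonneg hC₁0 hC0) dist_nonneg
  · have hs0 : 0 < s := (mem_Ici.1 ht).trans_lt hts
    have slope : (φ' t - φ' s) / (t - s) ≤ C₁ * C :=
      (hC₁ t s ht hts).trans (mul_le_mul_of_nonneg_left (hC s hs0) hC₁0)
    rw [div_le_iff_of_neg (sub_neg.2 hts)] at slope
    rw [Real.dist_eq, abs_of_pos (sub_pos.2 hts)]
    linarith

end IsNFunction

/-- `m` is the slope of a ray through the origin that lies above the graph of `φ'` on `[0, t]` and
below it on `[t, ∞)`. When `φ'(t)/t` is non-decreasing, `φ'(t)/t` is such a slope for `t > 0` and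
`lim_{s↘0} φ'(s)/s` is one for `t = 0`, which covers both cases of the IRLS weight. -/
structure IsSecantSlope (φ' : ℝ → ℝ) (t m : ℝ) : Prop where
  deriv_le : ∀ x, 0 ≤ x → x ≤ t → φ' x ≤ m * x
  le_deriv : ∀ x, t ≤ x → m * x ≤ φ' x

lemma isSecantSlope_zero {φ' : ℝ → ℝ} {c : ℝ} (h0 : φ' 0 = 0) (hc : ∀ t, 0 < t → c ≤ φ' t / t) :
    IsSecantSlope φ' 0 c where
  deriv_le x hx hx' := by
    obtain rfl := le_antisymm hx' hx
    rw [h0, mul_zero]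
  le_deriv x hx := by
    rcases hx.eq_or_lt with rfl | hx
    · rw [h0, mul_zero]
    · exact (le_div_iff₀ hx).1 (hc x hx)

lemma isSecantSlope_div {φ' : ℝ → ℝ} (h0 : φ' 0 = 0)
    (hmono : MonotoneOn (fun t => φ' t / t) (Ioi 0)) {t : ℝ} (ht : 0 < t) :
    IsSecantSlope φ' t (φ' t / t) where
  deriv_le x hx hxt := by
    rcases hx.eq_or_lt with rfl | hx
    · rw [h0, mul_zero]
    · exact (div_le_iff₀ hx).1 (hmono hx ht hxt)
  le_deriv x htx :=
    have hx : 0 < x := ht.trans_le htx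
    (le_div_iff₀ hx).1 (hmono ht hx htx)

namespace IsSecantSlope

variable {φ φ' : ℝ → ℝ} {t m : ℝ}

lemma deriv_eq (hm : IsSecantSlope φ' t m) (ht : 0 ≤ t) : φ' t = m * t :=
  le_antisymm (hm.deriv_le t ht le_rfl) (hm.le_deriv t le_rfl)

lemma le_lipschitz (hm : IsSecantSlope φ' t m) (h : IsNFunction φ φ') {K : NNReal}
    (hK : LipschitzOnWith K φ' (Ici 0)) (ht : 0 ≤ t) : m ≤ K :=
  le_of_mul_le_mul_right
    ((hm.le_deriv (t + 1) (by linarith)).trans (h.deriv_le_lipschitz_mul hK (by linarith)))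
    (by linarith : 0 < t + 1)

lemma add_sq_sub_sq_le (hm : IsSecantSlope φ' t m) (h : IsNFunction φ φ') (ht : 0 ≤ t) {s : ℝ}
    (hs : 0 ≤ s) : φ t + m / 2 * (s ^ 2 - t ^ 2) ≤ φ s := by
  have crossing : ∫ x in t..s, m * x ≤ ∫ x in t..s, φ' x :=
    intervalIntegral_le_of_crossing (Continuous.intervalIntegrable (by fun_prop) _ _)
      (h.intervalIntegrable_deriv ht hs) (fun x hx => hm.deriv_le x (hs.trans hx.1) hx.2)
      (fun x hx => hm.le_deriv x hx.1)
  rw [h.integral_deriv ht hs, intervalIntegral.integral_const_mul, integral_id] at crossing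
  linarith

lemma fenchelConj_le (hm : IsSecantSlope φ' t m) (h : IsNFunction φ φ') (ht : 0 ≤ t) (hm0 : 0 < m)
    (q : ℝ) : fenchelConj φ q ≤ fenchelConj φ (φ' t) + (q ^ 2 - φ' t ^ 2) / (2 * m) := by
  refine csSup_le ⟨_, 0, le_rfl, rfl⟩ ?_
  rintro x ⟨s, hs, rfl⟩
  have parabola_conj : q * s - m / 2 * s ^ 2 ≤ q ^ 2 / (2 * m) := by
    rw [le_div_iff₀ (by positivity)]
    linarith [sq_nonneg (q - m * s)]
  have touching : (q ^ 2 - φ' t ^ 2) / (2 * m) = q ^ 2 / (2 * m) - m / 2 * t ^ 2 := by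
    rw [hm.deriv_eq ht]
    field_simp
  rw [h.fenchelConj_deriv ht, touching, hm.deriv_eq ht]
  linarith [hm.add_sq_sub_sq_le h ht hs]

end IsSecantSlope

lemma eq_inv_of_tendsto_rcInv_div {φ φ' : ℝ → ℝ} {c w L : ℝ} (h : IsNFunction φ φ')
    (hmono : StrictMonoOn φ' (Ici 0)) (hc : c ≠ 0)
    (hlim : Tendsto (fun t => φ' t / t) (𝓝[>] 0) (𝓝 c)) (hw : 0 < w)
    (hL : Tendsto (fun t => rcInv φ' (w⁻¹ * t) / t) (𝓝[>] 0) (𝓝 L)) : L = (w * c)⁻¹ := by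
  have substitution : Tendsto (fun x => w * φ' x) (𝓝[>] 0) (𝓝[>] 0) := by
    refine tendsto_nhdsWithin_iff.2 ⟨?_, ?_⟩
    · simpa only [h.deriv_zero, mul_zero] using (h.deriv_rightContinuous 0 le_rfl).const_mul w
    · filter_upwards [self_mem_nhdsWithin] with x hx using mul_pos hw (h.deriv_pos x hx)
  have weight_limit : Tendsto (fun x => (w * (φ' x / x))⁻¹) (𝓝[>] 0) (𝓝 (w * c)⁻¹) :=
    (hlim.const_mul w).inv₀ (mul_ne_zero hw.ne' hc)
  refine tendsto_nhds_unique ((hL.comp substitution).congr' ?_) weight_limit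
  filter_upwards [self_mem_nhdsWithin] with x hx
  rw [Function.comp_apply, inv_mul_cancel_left₀ hw.ne', rcInv_apply hmono (mem_Ioi.1 hx).le,
    ← mul_div_assoc, inv_div]

lemma exists_isSecantSlope_quotW_eq {φ φ' : ℝ → ℝ} {c w L : ℝ} (h : IsNFunction φ φ')
    (hmono : MonotoneOn (fun t => φ' t / t) (Ioi 0)) (hcont : ContinuousOn φ' (Ici 0)) (hc : 0 < c)
    (hlim : Tendsto (fun t => φ' t / t) (𝓝[>] 0) (𝓝 c)) (hw : 0 < w)
    (hL : Tendsto (fun t => rcInv φ' (w⁻¹ * t) / t) (𝓝[>] 0) (𝓝 L)) (x : ℝ) :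
    ∃ t m, 0 ≤ t ∧ c ≤ m ∧ IsSecantSlope φ' t m ∧ φ' t = w⁻¹ * |x| ∧
      quotW φ' w L x = (w * m)⁻¹ := by
  have hstrict := h.strictMonoOn_deriv hmono
  have c_le : ∀ t, 0 < t → c ≤ φ' t / t := fun t ht =>
    le_of_monotoneOn_of_tendsto_nhdsGT (f := fun t => φ' t / t) hmono hlim ht
  rcases eq_or_ne x 0 with rfl | hx
  · refine ⟨0, c, le_rfl, le_rfl, isSecantSlope_zero h.deriv_zero c_le, ?_, ?_⟩
    · rw [h.deriv_zero, abs_zero, mul_zero]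
    · rw [quotW, if_pos rfl, eq_inv_of_tendsto_rcInv_div h hstrict hc.ne' hlim hw hL]
  · obtain ⟨t, ht, htx⟩ := h.exists_deriv_eq hcont (r := w⁻¹ * |x|) (by positivity)
    have ht0 : 0 < t := ht.lt_of_ne' fun h0 => by
      have : 0 < φ' t := htx ▸ by positivity
      exact this.ne' (h0 ▸ h.deriv_zero)
    refine ⟨t, φ' t / t, ht, c_le t ht0, isSecantSlope_div h.deriv_zero hmono ht0, htx, ?_⟩
    rw [quotW, if_neg hx, ← htx, rcInv_apply hstrict ht, htx]
    field_simp

/-- The contribution `w φ*(w⁻¹|x|)` of one coordinate to the nonlinear part of the dual energy. -/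
def dualDensity (φ : ℝ → ℝ) (w x : ℝ) : ℝ := w * fenchelConj φ (w⁻¹ * |x|)

section DualDensity

variable {φ φ' : ℝ → ℝ} {w t m x : ℝ}

lemma dualDensity_le (h : IsNFunction φ φ') (hm : IsSecantSlope φ' t m) (ht : 0 ≤ t) (hm0 : 0 < m)
    (hw : 0 < w) (hx : φ' t = w⁻¹ * |x|) (z : ℝ) :
    dualDensity φ w z ≤ dualDensity φ w x + (w * m)⁻¹ / 2 * (z ^ 2 - x ^ 2) := by
  have conj_le := mul_le_mul_of_nonneg_left (hm.fenchelConj_le h ht hm0 (w⁻¹ * |z|)) hw.le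
  have scaling : w * (((w⁻¹ * |z|) ^ 2 - (w⁻¹ * |x|) ^ 2) / (2 * m)) =
      (w * m)⁻¹ / 2 * (z ^ 2 - x ^ 2) := by
    rw [mul_pow, mul_pow, sq_abs, sq_abs]
    field_simp
  rwa [hx, mul_add, scaling] at conj_le

-- The difference of the two sides is `(a - b) * (|x| * |y| - x * y)`.
lemma quadratic_le_quadratic_abs {a b : ℝ} (hab : b ≤ a) (x y : ℝ) :
    a * x * (y - x) + b / 2 * (y - x) ^ 2 ≤
      a * |x| * (|y| - |x|) + b / 2 * (|y| - |x|) ^ 2 := by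
  have xy_le : x * y ≤ |x| * |y| := abs_mul x y ▸ le_abs_self (x * y)
  linear_combination mul_le_mul_of_nonneg_left xy_le (sub_nonneg.2 hab) +
    (a - b / 2) * sq_abs x - b / 2 * sq_abs y

lemma dualDensity_add_le (h : IsNFunction φ φ') {K : NNReal} (hK : LipschitzOnWith K φ' (Ici 0))
    (hm : IsSecantSlope φ' t m) (ht : 0 ≤ t) (hm0 : 0 < m) (hw : 0 < w) (hx : φ' t = w⁻¹ * |x|)
    (y : ℝ) :
    dualDensity φ w x + (w * m)⁻¹ * x * (y - x) + (w * K)⁻¹ / 2 * (y - x) ^ 2 ≤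
      dualDensity φ w y := by
  have hmK : m ≤ K := hm.le_lipschitz h hK ht
  have hK0 : 0 < (K : ℝ) := hm0.trans_le hmK
  have ht_eq : t = m⁻¹ * (w⁻¹ * |x|) := by
    rw [← hx, hm.deriv_eq ht, inv_mul_cancel_left₀ hm0.ne']
  have strong := mul_le_mul_of_nonneg_left
    (h.fenchelConj_deriv_add_le hK ht (q := w⁻¹ * |y|) (by positivity)) hw.le
  have scaling : w * (t * (w⁻¹ * |y| - w⁻¹ * |x|) + (w⁻¹ * |y| - w⁻¹ * |x|) ^ 2 / (2 * K)) =
      (w * m)⁻¹ * |x| * (|y| - |x|) + (w * K)⁻¹ / 2 * (|y| - |x|) ^ 2 := by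
    rw [ht_eq]
    field_simp
  have signed := quadratic_le_quadratic_abs
    (inv_anti₀ (mul_pos hw hm0) (mul_le_mul_of_nonneg_left hmK hw.le)) x y
  rw [hx, add_assoc, mul_add, scaling] at strong
  unfold dualDensity
  linarith

end DualDensity

lemma sub_le_of_quadratic_majorant {ψ : ℝ → ℝ} {a μ κ x y z : ℝ} (ha : 0 ≤ a) (hκ : 0 ≤ κ)
    (hκa : κ * a ≤ μ) (majorant : ψ z ≤ ψ x + a / 2 * (z ^ 2 - x ^ 2))
    (strong : ψ x + a * x * (y - x) + μ / 2 * (y - x) ^ 2 ≤ ψ y) :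
    ψ z - ψ x ≤ κ * (ψ y - ψ x) + a * z * (z - (x + κ * (y - x))) := by
  set p := x + κ * (y - x) with p_def
  calc ψ z - ψ x ≤ a / 2 * (z ^ 2 - x ^ 2) := by linarith
    _ = a * z * (z - p) + a / 2 * (p ^ 2 - x ^ 2) - a / 2 * (z - p) ^ 2 := by ring
    _ ≤ a * z * (z - p) + a / 2 * (p ^ 2 - x ^ 2) := sub_le_self _ (by positivity)
    _ = a * z * (z - p) + κ * (a * x * (y - x) + κ * a / 2 * (y - x) ^ 2) := by rw [p_def]; ring
    _ ≤ a * z * (z - p) + κ * (a * x * (y - x) + μ / 2 * (y - x) ^ 2) := by gcongr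
    _ ≤ a * z * (z - p) + κ * (ψ y - ψ x) := by gcongr; linarith
    _ = κ * (ψ y - ψ x) + a * z * (z - p) := add_comm _ _

lemma dualDensity_sub_le {φ φ' : ℝ → ℝ} {c w L κ : ℝ} {K : NNReal} (h : IsNFunction φ φ')
    (hmono : MonotoneOn (fun t => φ' t / t) (Ioi 0)) (hK : LipschitzOnWith K φ' (Ici 0))
    (hc : 0 < c) (hlim : Tendsto (fun t => φ' t / t) (𝓝[>] 0) (𝓝 c)) (hw : 0 < w)
    (hL : Tendsto (fun t => rcInv φ' (w⁻¹ * t) / t) (𝓝[>] 0) (𝓝 L))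
    (hκ : 0 ≤ κ) (hκK : κ * K ≤ c) (x y z : ℝ) :
    dualDensity φ w z - dualDensity φ w x ≤ κ * (dualDensity φ w y - dualDensity φ w x) +
      quotW φ' w L x * z * (z - (x + κ * (y - x))) := by
  obtain ⟨t, m, ht, hcm, hm, hx, hquot⟩ :=
    exists_isSecantSlope_quotW_eq h hmono hK.continuousOn hc hlim hw hL x
  have hm0 : 0 < m := hc.trans_le hcm
  have hK0 : 0 < (K : ℝ) := h.lipschitz_pos hK
  have curvature : κ * (w * m)⁻¹ ≤ (w * K)⁻¹ := by
    rw [← div_eq_mul_inv, ← one_div, div_le_div_iff₀ (by positivity) (by positivity)]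
    linear_combination w * (hκK.trans hcm)
  rw [hquot]
  exact sub_le_of_quadratic_majorant (by positivity) hκ curvature
    (dualDensity_le h hm ht hm0 hw hx z) (dualDensity_add_le h hK hm ht hm0 hw hx y)

section DualEnergy

variable {N M : ℕ} {B : (Fin N → ℝ) →ₗ[ℝ] (Fin M → ℝ)} {V₀ : Submodule ℝ (Fin N → ℝ)}
  {f g : Fin N → ℝ}

lemma add_smul_sub_mem_SigmaF {x y : Fin M → ℝ} (hx : x ∈ SigmaF B V₀ f) (hy : y ∈ SigmaF B V₀ f)
    (κ : ℝ) : x + κ • (y - x) ∈ SigmaF B V₀ f := fun v hv => by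
  simp only [Pi.add_apply, Pi.smul_apply, Pi.sub_apply, smul_eq_mul, add_mul, sub_mul, mul_assoc,
    Finset.sum_add_distrib, ← Finset.mul_sum, Finset.sum_sub_distrib, hx v hv, hy v hv, sub_self,
    mul_zero, add_zero]

lemma sum_sub_mul_apply_add {x y : Fin M → ℝ} (hx : x ∈ SigmaF B V₀ f) (hy : y ∈ SigmaF B V₀ f)
    {u : Fin N → ℝ} (hu : u ∈ V₀) :
    ∑ α, (y α - x α) * B (u + g) α = ∑ α, y α * B g α - ∑ α, x α * B g α := by
  simp only [map_add, Pi.add_apply, mul_add, sub_mul, Finset.sum_add_distrib,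
    Finset.sum_sub_distrib, hx u hu, hy u hu, sub_self, zero_add]

lemma dualJ_sub_le {φ : ℝ → ℝ} {w a x y z : Fin M → ℝ} {u : Fin N → ℝ} {κ : ℝ} (hu : u ∈ V₀)
    (hx : x ∈ SigmaF B V₀ f) (hy : y ∈ SigmaF B V₀ f) (hz : z ∈ SigmaF B V₀ f)
    (hsaddle : ∀ τ : Fin M → ℝ, ∑ α, a α * z α * τ α - ∑ α, τ α * B (u + g) α = 0)
    (hdensity : ∀ α, dualDensity φ (w α) (z α) - dualDensity φ (w α) (x α) ≤
      κ * (dualDensity φ (w α) (y α) - dualDensity φ (w α) (x α)) +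
        a α * z α * (z α - (x α + κ * (y α - x α)))) :
    dualJ w (fenchelConj φ) B g z - dualJ w (fenchelConj φ) B g x ≤
      κ * (dualJ w (fenchelConj φ) B g y - dualJ w (fenchelConj φ) B g x) := by
  have dualJ_eq (τ : Fin M → ℝ) : dualJ w (fenchelConj φ) B g τ =
      ∑ α, dualDensity φ (w α) (τ α) - ∑ α, τ α * B g α := rfl
  have saddle : ∑ α, a α * z α * (z α - (x α + κ * (y α - x α))) =
      ∑ α, z α * B g α - ∑ α, (x + κ • (y - x)) α * B g α :=
    (sub_eq_zero.1 (hsaddle (z - (x + κ • (y - x))))).trans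
      (sum_sub_mul_apply_add (add_smul_sub_mem_SigmaF hx hy κ) hz hu)
  have linear_part : ∑ α, (x + κ • (y - x)) α * B g α =
      ∑ α, x α * B g α + κ * (∑ α, y α * B g α - ∑ α, x α * B g α) := by
    simp only [Pi.add_apply, Pi.smul_apply, Pi.sub_apply, smul_eq_mul, add_mul, sub_mul, mul_assoc,
      Finset.sum_add_distrib, ← Finset.mul_sum, Finset.sum_sub_distrib]
  have density_sum := Finset.sum_le_sum fun α (_ : α ∈ Finset.univ) => hdensity α
  simp only [Finset.sum_add_distrib, ← Finset.mul_sum, Finset.sum_sub_distrib, saddle,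
    linear_part] at density_sum
  rw [dualJ_eq, dualJ_eq, dualJ_eq]
  linarith

end DualEnergy

theorem dual_IRLS_linear_convergence_general {φ φ' : ℝ → ℝ} {C₁ C cφ Cφ : ℝ}
    (hφ : IsNFunction φ φ')
    (hC₁ : ∀ t s : ℝ, 0 ≤ t → t < s → (φ' t - φ' s) / (t - s) ≤ C₁ * (φ' s / s)) (hC : C₁ < C)
    (hmono : MonotoneOn (fun t => φ' t / t) (Ioi 0)) (hcφ : 0 < cφ)
    (hlim_zero : Tendsto (fun t => φ' t / t) (𝓝[>] 0) (𝓝 cφ))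
    (hlim_top : Tendsto (fun t => φ' t / t) atTop (𝓝 Cφ))
    {N M : ℕ} {B : (Fin N → ℝ) →ₗ[ℝ] (Fin M → ℝ)} {V₀ : Submodule ℝ (Fin N → ℝ)}
    {g f : Fin N → ℝ} {w L : Fin M → ℝ} (hw : ∀ α, 0 < w α)
    (hL : ∀ α, Tendsto (fun t => rcInv φ' ((w α)⁻¹ * t) / t) (𝓝[>] 0) (𝓝 (L α)))
    {σ : ℕ → Fin M → ℝ} {u : ℕ → Fin N → ℝ} (hσ₀ : σ 0 ∈ SigmaF B V₀ f)
    (hu : ∀ n, u (n + 1) ∈ V₀)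
    (hsaddle : ∀ (n : ℕ) (τ : Fin M → ℝ),
      ∑ α, quotW φ' (w α) (L α) (σ n α) * σ (n + 1) α * τ α
        - ∑ α, τ α * B (u (n + 1) + g) α = 0)
    (hconstraint : ∀ n, σ (n + 1) ∈ SigmaF B V₀ f)
    {τ : Fin M → ℝ} (hτ : τ ∈ SigmaF B V₀ f) :
    (∀ n, σ n ∈ SigmaF B V₀ f) ∧ 0 < cφ / (C * Cφ) ∧ cφ / (C * Cφ) < 1 ∧
    ∀ n, dualJ w (fenchelConj φ) B g (σ n) - dualJ w (fenchelConj φ) B g τ ≤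
      (1 - cφ / (C * Cφ)) ^ n *
        (dualJ w (fenchelConj φ) B g (σ 0) - dualJ w (fenchelConj φ) B g τ) := by
  have hσ : ∀ n, σ n ∈ SigmaF B V₀ f
    | 0 => hσ₀
    | n + 1 => hconstraint n
  have hC₁_one : 1 ≤ C₁ := hφ.one_le_of_slope_le hC₁
  have hC0 : 0 < C := by linarith
  have ratio_le : ∀ t, 0 < t → φ' t / t ≤ Cφ := fun t ht =>
    le_of_monotoneOn_of_tendsto_atTop (f := fun t => φ' t / t) hmono hlim_top ht
  have hcCφ : cφ ≤ Cφ :=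
    (le_of_monotoneOn_of_tendsto_nhdsGT hmono hlim_zero one_pos).trans (ratio_le 1 one_pos)
  have hCφ : 0 < Cφ := hcφ.trans_le hcCφ
  have hlip : LipschitzOnWith (C₁ * Cφ).toNNReal φ' (Ici 0) := hφ.lipschitzOnWith_deriv hC₁ ratio_le
  set κ := cφ / (C * Cφ) with κ_def
  have hκ0 : 0 < κ := by positivity
  have hκ1 : κ < 1 := by
    rw [κ_def, div_lt_one (by positivity)]
    linarith [mul_lt_mul_of_pos_right (hC₁_one.trans_lt hC) hCφ]
  have hκK : κ * (C₁ * Cφ).toNNReal ≤ cφ := by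
    rw [Real.coe_toNNReal _ (by positivity)]
    calc κ * (C₁ * Cφ) ≤ κ * (C * Cφ) := by gcongr
      _ = cφ := div_mul_cancel₀ _ (by positivity)
  refine ⟨hσ, hκ0, hκ1, fun n => le_geom (u := fun k => dualJ w (fenchelConj φ) B g (σ k) -
    dualJ w (fenchelConj φ) B g τ) (sub_nonneg.2 hκ1.le) n fun k _ => ?_⟩
  have descent := dualJ_sub_le (hu k) (hσ k) hτ (hσ (k + 1)) (hsaddle k) fun α =>
    dualDensity_sub_le hφ hmono hlip hcφ hlim_zero (hw α) (hL α) hκ0.le hκK _ _ _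
  linarith

/-- linear convergence of the dual IRLS scheme. There is a
constant `C_uc`, depending only on the uniform convexity constants `c₁ ≤ C₁`,
such that for every setting satisfying the hypotheses the iterates stay in
`Σ_f` and, with `κ = c_φ/(4 C_uc C_φ) ∈ (0,1)`,
`J*(σⁿ) − J*(σ) ≤ (1−κ)ⁿ (J*(σ⁰) − J*(σ))`. -/
theorem dual_IRLS_linear_convergence (c₁ C₁ : ℝ) (hc₁ : 0 < c₁) (hc₁C₁ : c₁ ≤ C₁) :
    ∃ Cuc : ℝ, 0 < Cuc ∧
    ∀ (φ φ' : ℝ → ℝ), IsNFunction φ φ' →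
    -- uniform convexity with constants c₁ ≤ C₁
    (∀ t s : ℝ, 0 ≤ t → t < s →
      c₁ * (φ' s / s) ≤ (φ' t - φ' s) / (t - s) ∧
      (φ' t - φ' s) / (t - s) ≤ C₁ * (φ' s / s)) →
    -- φ'(t)/t non-decreasing
    (∀ t T : ℝ, 0 < t → t ≤ T → φ' t / t ≤ φ' T / T) →
    ∀ (cφ Cφ : ℝ), 0 < cφ →
    Tendsto (fun t : ℝ => φ' t / t) (nhdsWithin 0 (Set.Ioi 0)) (nhds cφ) →
    Tendsto (fun T : ℝ => φ' T / T) atTop (nhds Cφ) →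
    ∀ (N M : ℕ) (B : (Fin N → ℝ) →ₗ[ℝ] (Fin M → ℝ)) (V₀ : Submodule ℝ (Fin N → ℝ)),
    (∀ v ∈ V₀, B v = 0 → v = 0) →
    ∀ (g f : Fin N → ℝ) (w : Fin M → ℝ), (∀ α, 0 < w α) →
    -- right limits interpreting the weight at σⁿ_α = 0
    ∀ (L : Fin M → ℝ),
    (∀ α, Tendsto (fun t : ℝ => rcInv φ' ((w α)⁻¹ * t) / t)
      (nhdsWithin 0 (Set.Ioi 0)) (nhds (L α))) →
    ∀ (σs : ℕ → Fin M → ℝ) (us : ℕ → Fin N → ℝ),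
    σs 0 ∈ SigmaF B V₀ f →
    (∀ n : ℕ, us (n + 1) ∈ V₀) →
    -- dual IRLS saddle-point system, first equation
    (∀ n : ℕ, ∀ τ : Fin M → ℝ,
      (∑ α, quotW φ' (w α) (L α) (σs n α) * σs (n + 1) α * τ α)
        - (∑ α, τ α * B (us (n + 1) + g) α) = 0) →
    -- dual IRLS saddle-point system, second equation
    (∀ n : ℕ, ∀ v ∈ V₀, (∑ α, σs (n + 1) α * B v α) = ∑ i, f i * v i) →
    ∀ σmin ∈ SigmaF B V₀ f,
    (∀ τ ∈ SigmaF B V₀ f,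
      dualJ w (fenchelConj φ) B g σmin ≤ dualJ w (fenchelConj φ) B g τ) →
    (∀ n : ℕ, σs n ∈ SigmaF B V₀ f) ∧
    0 < cφ / (4 * Cuc * Cφ) ∧ cφ / (4 * Cuc * Cφ) < 1 ∧
    ∀ n : ℕ,
      dualJ w (fenchelConj φ) B g (σs n) - dualJ w (fenchelConj φ) B g σmin ≤
        (1 - cφ / (4 * Cuc * Cφ)) ^ n *
          (dualJ w (fenchelConj φ) B g (σs 0) - dualJ w (fenchelConj φ) B g σmin) := by
  refine ⟨C₁, by linarith, fun φ φ' hφ huc hmono cφ Cφ hcφ hlim_zero hlim_top N M B V₀ _ g f w hw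
    L hL σs us hσ₀ hus hsaddle hconstraint σmin hσmin _ => ?_⟩
  exact dual_IRLS_linear_convergence_general hφ (fun t s ht hts => (huc t s ht hts).2)
    (by linarith) (fun t ht s _ hts => hmono t s ht hts) hcφ hlim_zero hlim_top hw hL hσ₀ hus
    hsaddle hconstraint hσmin
end
end
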